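/- arXiv:1808.05435 — 3 statements merged into one kernel-verified Lean document; each statement's English description precedes it below -/
import Mathlib

section
/- Let A be a complex semisimple unital Banach algebra with Soc A ≠ {0}. Then A is prime if and only if for all nonzero a, b ∈ A the following are equivalent: (i) σ'(ax) ⊆ σ'(bx) for all x ∈ A; (ii) a = b. -/
open Complex

noncomputable section

/-- The nonzero spectrum `σ'(x) = σ(x) \ {0}` of an element of a complex algebra. -/
def nzSpec {A : Type*} [Ring A] [Algebra ℂ A] (x : A) : Set ℂ :=
  spectrum ℂ x \ {0}

/-- The spectral rank of an element: `rank a = sup_{x ∈ A} #σ'(xa)`, valued in `ℕ∞`. -/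
noncomputable def srank {A : Type*} [Ring A] [Algebra ℂ A] (a : A) : ℕ∞ :=
  ⨆ x : A, (nzSpec (x * a)).encard

/-- The socle of `A`: the set of finite-rank elements. -/
def socle (A : Type*) [Ring A] [Algebra ℂ A] : Set A :=
  {a : A | srank a ≠ ⊤}

/-- `A` is (Jacobson) semisimple: its Jacobson radical is `{0}`. -/
def JacobsonSemisimple (A : Type*) [Ring A] : Prop :=
  TwoSidedIdeal.jacobson (⊥ : TwoSidedIdeal A) = ⊥

/-- `Soc A` is a minimal two-sided ideal: it is a nonzero two-sided ideal containing
no two-sided ideals other than `{0}` and itself. -/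
def SocleIsMinimalTwoSidedIdeal (A : Type*) [Ring A] [Algebra ℂ A] : Prop :=
  ∃ I : TwoSidedIdeal A, (I : Set A) = socle A ∧ I ≠ ⊥ ∧
    ∀ J : TwoSidedIdeal A, J ≤ I → J = ⊥ ∨ J = I

/-- `A` is a prime algebra: all nonzero two-sided ideals `I, J` satisfy `IJ ≠ {0}`. -/
def IsPrimeAlgebra (A : Type*) [Ring A] : Prop :=
  ∀ I J : TwoSidedIdeal A, I ≠ ⊥ → J ≠ ⊥ → ∃ x ∈ I, ∃ y ∈ J, x * y ≠ 0

/-- The left annihilator of the socle equals `{0}`. -/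
def LeftAnnSocleTrivial (A : Type*) [Ring A] [Algebra ℂ A] : Prop :=
  {x : A | ∀ y ∈ socle A, x * y = 0} = {0}


section helpers

set_option linter.unusedSectionVars false

variable {A : Type*} [NormedRing A] [NormOneClass A] [NormedAlgebra ℂ A] [CompleteSpace A]

theorem aux_mem_nzSpec (x : A) (c : ℂ) :
    c ∈ nzSpec x ↔ c ≠ 0 ∧ ¬ IsUnit (c • (1 : A) - x) := by
  simp only [nzSpec, Set.mem_sdiff, spectrum.mem_iff, Set.mem_singleton_iff,
    Algebra.algebraMap_eq_smul_one]
  tauto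

theorem aux_qn_norm {q : A} (hq : nzSpec q = ∅) {r : ℝ} (hr : 0 < r) :
    ∃ N, ∀ n ≥ N, ‖q ^ n‖ ≤ r ^ n := by
  have h0 : spectralRadius ℂ q = 0 := by
    unfold spectralRadius
    simp only [ENNReal.iSup_eq_zero]
    intro k hk
    by_contra hne
    have : k ∈ nzSpec q := ⟨hk, by
      rintro rfl
      simp at hne⟩
    rw [hq] at this
    exact this
  have h := spectrum.pow_norm_pow_one_div_tendsto_nhds_spectralRadius q
  rw [h0] at h
  have h2 := h.eventually (gt_mem_nhds (ENNReal.ofReal_pos.2 hr))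
  obtain ⟨N, hN⟩ := Filter.eventually_atTop.1 h2
  refine ⟨max N 1, fun n hn => ?_⟩
  have h3 := hN n (le_trans (le_max_left _ _) hn)
  have hn1 : 1 ≤ n := le_trans (le_max_right _ _) hn
  rw [ENNReal.ofReal_lt_ofReal_iff hr] at h3
  have h4 : (‖q ^ n‖ ^ (1 / n : ℝ)) ^ n ≤ r ^ n :=
    pow_le_pow_left₀ (Real.rpow_nonneg (norm_nonneg _) _) h3.le n
  rwa [one_div, Real.rpow_inv_natCast_pow (norm_nonneg _) (by omega)] at h4

theorem aux_qn_mul {q x : A} (hq : nzSpec q = ∅) (hc : Commute x q) : nzSpec (x * q) = ∅ := by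
  rw [Set.eq_empty_iff_forall_notMem]
  rintro k ⟨hk, hk0⟩
  have hk0 : 0 < ‖k‖ := by simpa using hk0
  have hx : 0 < ‖x‖ + 1 := by positivity
  obtain ⟨N, hN⟩ := aux_qn_norm hq (r := ‖k‖ / (2 * (‖x‖ + 1))) (by positivity)
  have h1 := hN (N + 1) (by omega)
  have h2 : k ^ (N + 1) ∈ spectrum ℂ ((x * q) ^ (N + 1)) := spectrum.pow_mem_pow (x * q) (N + 1) hk
  have h3 := spectrum.norm_le_norm_of_mem h2
  rw [hc.mul_pow, norm_pow] at h3
  have h4 : ‖x ^ (N + 1) * q ^ (N + 1)‖ ≤ (‖x‖ + 1) ^ (N + 1) * (‖k‖ / (2 * (‖x‖ + 1))) ^ (N + 1) := by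
    refine (norm_mul_le _ _).trans ?_
    gcongr
    refine (norm_pow_le _ _).trans ?_
    gcongr
    linarith
  rw [← mul_pow, show (‖x‖ + 1) * (‖k‖ / (2 * (‖x‖ + 1))) = ‖k‖ / 2 by field_simp] at h4
  have h5 : (‖k‖ / 2) ^ (N + 1) < ‖k‖ ^ (N + 1) :=
    pow_lt_pow_left₀ (by linarith) (by positivity) (by omega)
  linarith

theorem aux_qn_unit {q : A} (hq : nzSpec q = ∅) {c : ℂ} (hc : c ≠ 0) :
    IsUnit (c • (1 : A) - q) := by
  by_contra h
  have := (aux_mem_nzSpec q c).2 ⟨hc, h⟩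
  rw [hq] at this
  exact this

theorem aux_catalan {q : A} (hq : nzSpec q = ∅) :
    ∃ C : A, C = 1 - q * (C * C) ∧ ∀ y, Commute y q → Commute y C := by
  have hle : ∀ n, (catalan n : ℝ) ≤ 4 ^ n := by
    intro n
    have h1 : catalan n ≤ 4 ^ n := by
      rw [catalan_eq_centralBinom_div]
      exact (Nat.div_le_self _ _).trans (Nat.centralBinom_le_four_pow n)
    exact_mod_cast h1
  have hsum : Summable (fun n => ‖(catalan n : ℂ) • (-q) ^ n‖) := by
    obtain ⟨N, hN⟩ := aux_qn_norm hq (r := 1 / 8) (by norm_num)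
    have hg : Summable (fun n : ℕ => (1 / 2 : ℝ) ^ n) := summable_geometric_two
    refine summable_of_isBigO_nat hg ?_
    refine Asymptotics.IsBigO.of_bound 1 ?_
    filter_upwards [Filter.eventually_ge_atTop N] with n hn
    have h1 : ‖(-q) ^ n‖ ≤ (1 / 8) ^ n := by
      have h2 := hN n hn
      rcases Nat.even_or_odd n with h | h
      · rwa [h.neg_pow]
      · rwa [h.neg_pow, norm_neg]
    rw [norm_norm, norm_smul, Complex.norm_natCast, one_mul, Real.norm_of_nonneg (by positivity)]
    calc (catalan n : ℝ) * ‖(-q) ^ n‖ ≤ 4 ^ n * (1 / 8) ^ n := by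
          gcongr
          exact hle n
      _ = (1 / 2) ^ n := by rw [← mul_pow]; norm_num
  refine ⟨∑' n, (catalan n : ℂ) • (-q) ^ n, ?_, ?_⟩
  · rw [tsum_mul_tsum_eq_tsum_sum_antidiagonal_of_summable_norm hsum hsum]
    have h1 : ∀ n, ∑ kl ∈ Finset.HasAntidiagonal.antidiagonal n,
        ((catalan kl.1 : ℂ) • (-q) ^ kl.1) * ((catalan kl.2 : ℂ) • (-q) ^ kl.2)
        = (catalan (n + 1) : ℂ) • (-q) ^ n := by
      intro n
      rw [catalan_succ']
      push_cast
      rw [Finset.sum_smul]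
      refine Finset.sum_congr rfl fun kl hkl => ?_
      rw [smul_mul_smul_comm, ← pow_add, Finset.HasAntidiagonal.mem_antidiagonal.1 hkl]
    have hs2 : Summable (fun n => (catalan (n + 1) : ℂ) • (-q) ^ n) := by
      have h2 := (summable_norm_sum_mul_antidiagonal_of_summable_norm hsum hsum).of_norm
      simpa only [h1] using h2
    simp only [h1]
    rw [hsum.of_norm.tsum_eq_zero_add, ← hs2.tsum_mul_left]
    rw [sub_eq_add_neg, ← tsum_neg]
    congr 1
    · simp
    · congr 1
      ext n
      rw [pow_succ', mul_smul_comm, neg_mul, smul_neg]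
  · intro y hy
    refine Commute.tsum_right _ fun n => ?_
    exact ((hy.neg_right).pow_right n).smul_right _

theorem aux_comm_identity {R : Type*} [CommRing R] (w U D : R)
    (hU : U * (1 + 4 * (w * w - w)) = 1) (hD : D = 1 + (w * w - w) * U * (D * D)) :
    (w * (1 + (1 - 2 * w) * ((w - 1) * (U * D)))) * (w * (1 + (1 - 2 * w) * ((w - 1) * (U * D))))
      = w * (1 + (1 - 2 * w) * ((w - 1) * (U * D))) := by
  linear_combination (-(w * w - w)) * hU
    - (1 + 4 * (w * w - w)) * ((w * w - w) * U) * hD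

theorem aux_noncomm_identity (w U D : A) (h1 : Commute w U) (h2 : Commute w D) (h3 : Commute U D)
    (hU : U * (1 + 4 * (w * w - w)) = 1) (hD : D = 1 + (w * w - w) * U * (D * D)) :
    (w * (1 + (1 - 2 * w) * ((w - 1) * (U * D)))) * (w * (1 + (1 - 2 * w) * ((w - 1) * (U * D))))
      = w * (1 + (1 - 2 * w) * ((w - 1) * (U * D))) := by
  have hc : ∀ a ∈ ({w, U, D} : Set A), ∀ b ∈ ({w, U, D} : Set A), a * b = b * a := by
    intro a ha b hb
    simp only [Set.mem_insert_iff, Set.mem_singleton_iff] at ha hb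
    rcases ha with rfl | rfl | rfl <;> rcases hb with rfl | rfl | rfl <;>
      first | rfl | exact h1.eq | exact h2.eq | exact h3.eq | exact h1.eq.symm
            | exact h2.eq.symm | exact h3.eq.symm
  have hmc := Algebra.isMulCommutative_adjoin ℂ hc
  let _ : CommRing (Algebra.adjoin ℂ ({w, U, D} : Set A)) :=
    { (inferInstance : Ring (Algebra.adjoin ℂ ({w, U, D} : Set A))) with
      mul_comm := fun a b => hmc.is_comm.comm a b }
  let w' : Algebra.adjoin ℂ ({w, U, D} : Set A) := ⟨w, Algebra.subset_adjoin (by simp)⟩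
  let U' : Algebra.adjoin ℂ ({w, U, D} : Set A) := ⟨U, Algebra.subset_adjoin (by simp)⟩
  let D' : Algebra.adjoin ℂ ({w, U, D} : Set A) := ⟨D, Algebra.subset_adjoin (by simp)⟩
  have h := aux_comm_identity w' U' D' (Subtype.ext hU) (Subtype.ext hD)
  exact congrArg Subtype.val h

theorem aux_idem {w : A} (hw : spectrum ℂ w ⊆ {0, 1}) (h1 : (1 : ℂ) ∈ spectrum ℂ w) :
    ∃ B : A, (w * B) * (w * B) = w * B ∧ w * B ≠ 0 ∧ ∀ y, Commute y w → Commute y B := by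
  have : Nontrivial A := NormOneClass.nontrivial
  obtain ⟨q, hqd⟩ : ∃ q, q = w * w - w := ⟨_, rfl⟩
  have hq : nzSpec q = ∅ := by
    rw [Set.eq_empty_iff_forall_notMem]
    rintro k ⟨hk, hk0⟩
    have h2 : q = Polynomial.aeval w (Polynomial.X * Polynomial.X - Polynomial.X : Polynomial ℂ) := by
      simp [hqd]
    rw [h2, spectrum.map_polynomial_aeval] at hk
    obtain ⟨z, hz, rfl⟩ := hk
    rcases hw hz with h | h
    · subst h; simp at hk0
    · rw [Set.mem_singleton_iff] at h
      subst h; simp at hk0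
  have hyq : ∀ y, Commute y w → Commute y q := fun y hy => by
    rw [hqd]; exact (hy.mul_right hy).sub_right hy
  have hS : IsUnit (1 + 4 * q) := by
    have h3 := aux_qn_unit (aux_qn_mul (x := -4) hq ?_) (c := 1) (by norm_num)
    · simpa using h3
    · exact ((Commute.ofNat_left 4 q)).neg_left
  obtain ⟨S, hSv⟩ := hS
  have hyU : ∀ y, Commute y w → Commute y (↑S⁻¹ : A) := fun y hy => by
    refine Commute.units_inv_right ?_
    rw [hSv]
    exact (Commute.one_right y).add_right ((Commute.ofNat_right y 4).mul_right (hyq y hy))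
  have hwU := hyU w (Commute.refl w)
  have hqU : Commute q (↑S⁻¹ : A) := (hyU q (hyq w (Commute.refl w)).symm)
  have hUU : (↑S⁻¹ : A) * (1 + 4 * q) = 1 := by rw [← hSv]; simp
  generalize (↑S⁻¹ : A) = U at *
  have hqq : nzSpec (-U * q) = ∅ := aux_qn_mul hq hqU.symm.neg_left
  obtain ⟨D, hD, hDc⟩ := aux_catalan hqq
  have hyD : ∀ y, Commute y w → Commute y D := fun y hy =>
    hDc y ((hyU y hy).neg_right.mul_right (hyq y hy))
  have hD' : D = 1 + q * U * (D * D) := by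
    rw [hqU.eq]
    conv_lhs => rw [hD]
    noncomm_ring
  have hyB : ∀ y, Commute y w → Commute y (1 + (1 - 2 * w) * ((w - 1) * (U * D))) := fun y hy => by
    refine (Commute.one_right y).add_right (Commute.mul_right ?_ (Commute.mul_right ?_ ?_))
    · exact (Commute.one_right y).sub_right ((Commute.ofNat_right y 2).mul_right hy)
    · exact hy.sub_right (Commute.one_right y)
    · exact (hyU y hy).mul_right (hyD y hy)
  refine ⟨1 + (1 - 2 * w) * ((w - 1) * (U * D)), ?_, ?_, hyB⟩
  · rw [hqd] at hUU hD'
    exact aux_noncomm_identity w U D hwU (hyD w (Commute.refl w)) (hyD U hwU.symm) hUU hD'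
  · intro h0
    have e1 : w = ((2 * w - 1) * (U * D)) * q := by
      have c1 : Commute w ((2 * w - 1) * (U * D)) := by
        refine Commute.mul_right ?_ (hwU.mul_right (hyD w (Commute.refl w)))
        exact ((Commute.ofNat_right w 2).mul_right (Commute.refl w)).sub_right (Commute.one_right w)
      have c2 := hyq _ c1.symm
      have c3 : Commute (w - 1) (2 * w - 1) := by
        refine Commute.sub_left ?_ (Commute.one_left _)
        exact ((Commute.ofNat_right w 2).mul_right (Commute.refl w)).sub_right (Commute.one_right w)
      rw [c2.eq, hqd]
      have e2 : w - (w * w - w) * ((2 * w - 1) * (U * D)) =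
          w * (1 + (1 - 2 * w) * ((w - 1) * (U * D))) := by
        have e3 : w * w - w = w * (w - 1) := by noncomm_ring
        rw [e3, mul_assoc, ← mul_assoc (w - 1), c3.eq]
        noncomm_ring
      rw [h0] at e2
      exact sub_eq_zero.1 e2
    have c4 : Commute ((2 * w - 1) * (U * D)) q := by
      refine hyq _ (Commute.symm ?_)
      refine Commute.mul_right ?_ (hwU.mul_right (hyD w (Commute.refl w)))
      exact ((Commute.ofNat_right w 2).mul_right (Commute.refl w)).sub_right (Commute.one_right w)
    have h5 := aux_qn_mul hq c4
    rw [← e1] at h5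
    have : (1 : ℂ) ∈ nzSpec w := ⟨h1, by simp⟩
    rw [h5] at this
    exact this

theorem aux_orth {x y : A} (hxy : x * y = 0) (hyx : y * x = 0) :
    nzSpec (x + y) = nzSpec x ∪ nzSpec y := by
  ext c
  simp only [Set.mem_union, aux_mem_nzSpec]
  by_cases hc : c = 0
  · simp [hc]
  have h1 : (c • (1 : A) - x) * (c • (1 : A) - y) = (c • (1 : A)) * (c • (1 : A) - (x + y)) := by
    simp only [mul_sub, sub_mul, hxy, smul_mul_assoc, mul_smul_comm, one_mul, mul_one, mul_add]
    simp only [smul_sub]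
    abel
  have h2 : (c • (1 : A) - y) * (c • (1 : A) - x) = (c • (1 : A)) * (c • (1 : A) - (x + y)) := by
    simp only [mul_sub, sub_mul, hyx, smul_mul_assoc, mul_smul_comm, one_mul, mul_one, mul_add]
    simp only [smul_sub]
    abel
  have hcomm : Commute (c • (1 : A) - x) (c • (1 : A) - y) := h1.trans h2.symm
  have hu : IsUnit (c • (1 : A)) := by
    rw [← Algebra.algebraMap_eq_smul_one]
    exact (IsUnit.mk0 c hc).map (algebraMap ℂ A)
  have hcomm2 : Commute (c • (1 : A)) (c • (1 : A) - (x + y)) :=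
    (Commute.one_left _).smul_left _
  have h3 := hcomm.isUnit_mul_iff
  rw [h1, hcomm2.isUnit_mul_iff] at h3
  tauto

theorem aux_ss (hss : JacobsonSemisimple A) {s : A} (h : ∀ x, nzSpec (s * x) = ∅) : s = 0 := by
  have : s ∈ TwoSidedIdeal.jacobson (⊥ : TwoSidedIdeal A) := by
    rw [TwoSidedIdeal.mem_jacobson_iff]
    intro y
    have h1 : nzSpec (y * s) = ∅ := by
      have := spectrum.nonzero_mul_comm (𝕜 := ℂ) y s
      unfold nzSpec
      rw [this]
      exact h y
    have h2 := aux_qn_unit h1 (c := -1) (by norm_num)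
    obtain ⟨z, hz⟩ := h2.exists_left_inv
    refine ⟨-z, ?_⟩
    rw [TwoSidedIdeal.mem_bot, sub_eq_zero, ← hz]
    simp only [neg_smul, one_smul]
    noncomm_ring
  rw [hss] at this
  exact (TwoSidedIdeal.mem_bot A).1 this

theorem aux_prime (hp : IsPrimeAlgebra A) {e c : A} (h : ∀ z, e * z * c = 0) : e = 0 ∨ c = 0 := by
  by_contra! hne
  let I : TwoSidedIdeal A := TwoSidedIdeal.mk' {x | ∀ z, x * z * c = 0} (by simp)
    (by intro x y hx hy z; rw [add_mul, add_mul, hx z, hy z, add_zero])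
    (by intro x hx z; rw [neg_mul, neg_mul, hx z, neg_zero])
    (by intro x y hy z; rw [mul_assoc x, mul_assoc x, hy z, mul_zero])
    (by intro x y hx z; rw [mul_assoc x, hx (y * z)])
  have hI : ∀ x, x ∈ I ↔ ∀ z, x * z * c = 0 := fun x => TwoSidedIdeal.mem_mk' _ _ _ _ _ _ x
  let J : TwoSidedIdeal A := TwoSidedIdeal.mk' {y | ∀ x ∈ I, ∀ z, x * z * y = 0} (by simp)
    (by intro y y' hy hy' x hx z; rw [mul_add, hy x hx z, hy' x hx z, add_zero])
    (by intro y hy x hx z; rw [mul_neg, hy x hx z, neg_zero])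
    (by intro u y hy x hx z; rw [← mul_assoc, mul_assoc x, hy x hx])
    (by intro y u hy x hx z; rw [← mul_assoc, hy x hx z, zero_mul])
  have hJ : ∀ y, y ∈ J ↔ ∀ x ∈ I, ∀ z, x * z * y = 0 :=
    fun y => TwoSidedIdeal.mem_mk' _ _ _ _ _ _ y
  have heI : e ∈ I := (hI e).2 h
  have hcJ : c ∈ J := (hJ c).2 fun x hx z => (hI x).1 hx z
  obtain ⟨x, hx, y, hy, hxy⟩ := hp I J
    (by intro h0; rw [h0, TwoSidedIdeal.mem_bot] at heI; exact hne.1 heI)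
    (by intro h0; rw [h0, TwoSidedIdeal.mem_bot] at hcJ; exact hne.2 hcJ)
  apply hxy
  simpa using (hJ y).1 hy x hx 1

theorem aux_one_mem {e : A} (he : e * e = e) (h0 : e ≠ 0) : (1 : ℂ) ∈ nzSpec e := by
  rw [aux_mem_nzSpec]
  refine ⟨one_ne_zero, fun h => h0 ?_⟩
  rw [one_smul] at h
  have h1 : (1 - e) * e = (1 - e) * 0 := by rw [sub_mul, he]; simp
  exact h.mul_left_cancel h1

theorem aux_smul {a : ℂ} (ha : a ≠ 0) (x : A) : nzSpec (a • x) = (fun c => a * c) '' nzSpec x := by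
  have key : ∀ c : ℂ, IsUnit ((a * c) • (1 : A) - a • x) ↔ IsUnit (c • (1 : A) - x) := by
    intro c
    rw [mul_smul, ← smul_sub]
    have := isUnit_smul_iff (Units.mk0 a ha) (c • (1 : A) - x)
    simpa [Units.smul_def] using this
  ext k
  simp only [Set.mem_image, aux_mem_nzSpec]
  constructor
  · rintro ⟨hk, hn⟩
    refine ⟨a⁻¹ * k, ⟨mul_ne_zero (inv_ne_zero ha) hk, ?_⟩, by field_simp⟩
    rw [← key]
    rwa [show a * (a⁻¹ * k) = k by field_simp]
  · rintro ⟨c, ⟨hc, hn⟩, rfl⟩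
    exact ⟨mul_ne_zero ha hc, by rwa [key]⟩

theorem aux_nz_comm (x y : A) : nzSpec (x * y) = nzSpec (y * x) :=
  spectrum.nonzero_mul_comm (𝕜 := ℂ) x y

theorem aux_le_srank (s x : A) : (nzSpec (x * s)).encard ≤ srank s :=
  le_iSup (fun x : A => (nzSpec (x * s)).encard) x

theorem aux_te {t e : A} {l : ℂ} (he : e * e = e) (hte : Commute t e)
    (hq : nzSpec ((t - l • (1 : A)) * e) = ∅) : nzSpec (t * e) ⊆ {l} := by
  intro m hm
  rw [aux_mem_nzSpec] at hm
  obtain ⟨hm0, hm1⟩ := hm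
  by_contra hml
  have hml : m - l ≠ 0 := sub_ne_zero.2 hml
  apply hm1
  have hff : (1 - e) * (1 - e) = 1 - e := by
    rw [sub_mul, mul_sub, mul_sub, he]; simp
  have hef : e * (1 - e) = 0 := by rw [mul_sub, he]; simp
  have hfe : (1 - e) * e = 0 := by rw [sub_mul, he]; simp
  have hDD : (m • (1 - e) + (m - l) • e) * (m⁻¹ • (1 - e) + (m - l)⁻¹ • e) = 1 := by
    simp only [mul_add, add_mul, smul_mul_smul_comm, hff, hef, hfe, he, mul_inv_cancel₀ hm0,
      mul_inv_cancel₀ hml]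
    simp
  have hDD' : (m⁻¹ • (1 - e) + (m - l)⁻¹ • e) * (m • (1 - e) + (m - l) • e) = 1 := by
    simp only [mul_add, add_mul, smul_mul_smul_comm, hff, hef, hfe, he, inv_mul_cancel₀ hm0,
      inv_mul_cancel₀ hml]
    simp
  have hec : Commute e ((t - l • (1 : A)) * e) :=
    (hte.symm.sub_right ((Commute.one_right e).smul_right l)).mul_right (Commute.refl e)
  have hD'c : Commute (m⁻¹ • (1 - e) + (m - l)⁻¹ • e) ((t - l • (1 : A)) * e) :=
    (((Commute.one_left _).sub_left hec).smul_left _).add_left (hec.smul_left _)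
  have h1 := aux_qn_unit (aux_qn_mul hq hD'c) (c := 1) one_ne_zero
  have h2 : IsUnit (m • (1 - e) + (m - l) • e) := ⟨⟨_, _, hDD, hDD'⟩, rfl⟩
  have h3 := h2.mul h1
  rw [mul_sub, ← mul_assoc, hDD, one_mul, one_smul, mul_one] at h3
  convert h3 using 1
  simp only [sub_mul, smul_mul_assoc, one_mul, smul_sub, sub_smul]
  abel

theorem aux_exists_e (hss : JacobsonSemisimple A) {s : A} (hs0 : s ≠ 0) (hs : srank s ≠ ⊤) :
    ∃ e : A, e ≠ 0 ∧ e * e = e ∧ ∀ z, e * z = z → z * e = z → (nzSpec z).Subsingleton := by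
  classical
  have : Nontrivial A := NormOneClass.nontrivial
  obtain ⟨x, hx⟩ := ENat.exists_eq_iSup_of_lt_top (f := fun x : A => (nzSpec (x * s)).encard)
    (lt_top_iff_ne_top.2 hs)
  change (nzSpec (x * s)).encard = srank s at hx
  have hfin : ∀ y, (nzSpec (y * s)).Finite := fun y => by
    rw [← Set.encard_ne_top_iff]
    exact ne_top_of_le_ne_top hs (aux_le_srank s y)
  have hne : (nzSpec (x * s)).Nonempty := by
    by_contra hemp
    rw [Set.not_nonempty_iff_eq_empty] at hemp
    rw [hemp, Set.encard_empty] at hx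
    apply hs0
    apply aux_ss hss
    intro y
    rw [aux_nz_comm, ← Set.encard_eq_zero]
    have := aux_le_srank s y
    rw [← hx] at this
    exact nonpos_iff_eq_zero.1 this
  obtain ⟨t, ht⟩ : ∃ t, t = x * s := ⟨_, rfl⟩
  rw [← ht] at hx hne
  have htf : (nzSpec t).Finite := ht ▸ hfin x
  obtain ⟨l, hl⟩ := hne
  have hl0 : l ≠ 0 := hl.2
  let F : Finset ℂ := insert 0 htf.toFinset
  have hF : ∀ c, c ∈ spectrum ℂ t → c ∈ F := by
    intro c hc
    by_cases h0 : c = 0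
    · simp [F, h0]
    · simp only [F, Finset.mem_insert, Set.Finite.mem_toFinset]
      exact Or.inr ⟨hc, h0⟩
  obtain ⟨p, hp1, hp0⟩ : ∃ p : Polynomial ℂ, p.eval l = 1 ∧ ∀ c ∈ F, c ≠ l → p.eval c = 0 := by
    refine ⟨Lagrange.basis F id l, ?_, ?_⟩
    · exact Lagrange.eval_basis_self (v := id) (Set.injOn_id _) (hF l hl.1)
    · intro c hc hcl
      exact Lagrange.eval_basis_of_ne (v := id) (Ne.symm hcl) hc
  obtain ⟨p', hp'⟩ : Polynomial.X ∣ p := by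
    rw [Polynomial.X_dvd_iff, Polynomial.coeff_zero_eq_eval_zero]
    exact hp0 0 (by simp [F]) hl0.symm
  obtain ⟨w, hw⟩ : ∃ w, w = Polynomial.aeval t p := ⟨_, rfl⟩
  have hwt : Commute t w := by
    rw [hw]
    have := Commute.map (Commute.all (Polynomial.X : Polynomial ℂ) p) (Polynomial.aeval t)
    simpa using this
  have hsp : spectrum ℂ w ⊆ {0, 1} := by
    rw [hw, spectrum.map_polynomial_aeval]
    rintro _ ⟨c, hc, rfl⟩
    by_cases hcl : c = l
    · simp [hcl, hp1]
    · simp [hp0 c (hF c hc) hcl]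
  have h1 : (1 : ℂ) ∈ spectrum ℂ w := by
    rw [hw, spectrum.map_polynomial_aeval]
    exact ⟨l, hl.1, hp1⟩
  obtain ⟨B, hB, hB0, hBc⟩ := aux_idem hsp h1
  have htB : Commute t B := hBc t hwt
  have hwB : Commute w B := hBc w (Commute.refl w)
  obtain ⟨e, he⟩ : ∃ e, e = w * B := ⟨_, rfl⟩
  have hte : Commute t e := he ▸ hwt.mul_right htB
  rw [← he] at hB hB0
  have heu : e = (B * Polynomial.aeval t p') * t := by
    rw [he, hwB.eq, mul_assoc, hw, hp', mul_comm Polynomial.X]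
    simp
  have hq : nzSpec ((t - l • (1 : A)) * e) = ∅ := by
    have h2 : nzSpec ((t - l • (1 : A)) * w) = ∅ := by
      have h3 : (t - l • (1 : A)) * w =
          Polynomial.aeval t ((Polynomial.X - Polynomial.C l) * p) := by
        simp [hw, Algebra.algebraMap_eq_smul_one]
      rw [Set.eq_empty_iff_forall_notMem]
      rintro k ⟨hk, hk0⟩
      rw [h3, spectrum.map_polynomial_aeval] at hk
      obtain ⟨c, hc, rfl⟩ := hk
      by_cases hcl : c = l
      · simp [hcl] at hk0
      · simp [hp0 c (hF c hc) hcl] at hk0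
    have hBq : Commute B ((t - l • (1 : A)) * w) :=
      (htB.symm.sub_right ((Commute.one_right B).smul_right l)).mul_right hwB.symm
    have h4 := aux_qn_mul h2 hBq
    rwa [hBq.eq, mul_assoc, ← he] at h4
  have hte1 := aux_te hB hte hq
  have hef : e * (1 - e) = 0 := by rw [mul_sub, hB]; simp
  have hfe : (1 - e) * e = 0 := by rw [sub_mul, hB]; simp
  have htf' : Commute t (1 - e) := (Commute.one_right t).sub_right hte
  have hsplit : nzSpec t = nzSpec (t * e) ∪ nzSpec (t * (1 - e)) := by
    rw [← aux_orth]
    · congr 1; noncomm_ring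
    · rw [htf'.eq, mul_assoc, ← mul_assoc e, hef]; simp
    · rw [hte.eq, mul_assoc, ← mul_assoc (1 - e), hfe]; simp
  have hN2 : srank s ≤ 1 + (nzSpec (t * (1 - e))).encard := by
    rw [← hx, hsplit]
    refine (Set.encard_union_le _ _).trans ?_
    gcongr
    exact (Set.encard_le_encard hte1).trans (by simp)
  have hN2f : (nzSpec (t * (1 - e))).Finite := htf.subset (by rw [hsplit]; simp)
  refine ⟨e, hB0, hB, fun z hez hze => ?_⟩
  have hzs : z = (z * (B * Polynomial.aeval t p') * x) * s := by
    conv_lhs => rw [← hze, heu, ht]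
    rw [ht]; simp only [mul_assoc]
  have hzf : (nzSpec z).Finite := by rw [hzs]; exact hfin _
  obtain ⟨a, ha⟩ := ((hzf.image2 (fun u v => u / v) hN2f).insert 0).exists_notMem
  rw [Set.mem_insert_iff, not_or] at ha
  obtain ⟨ha0, ha1⟩ := ha
  have hdisj : Disjoint (nzSpec z) (nzSpec (a • (t * (1 - e)))) := by
    rw [Set.disjoint_left]
    intro c hc hc'
    rw [aux_smul ha0] at hc'
    obtain ⟨d, hd, rfl⟩ := hc'
    apply ha1
    refine ⟨_, hc, d, hd, ?_⟩
    have : d ≠ 0 := hd.2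
    simp [this]
  have hun : nzSpec (z + a • (t * (1 - e))) = nzSpec z ∪ nzSpec (a • (t * (1 - e))) := by
    apply aux_orth
    · rw [mul_smul_comm, htf'.eq, ← mul_assoc, ← hze, mul_assoc z, hef]; simp
    · rw [smul_mul_assoc, mul_assoc, ← hez, ← mul_assoc (1 - e), hfe]; simp
  have hle : (nzSpec (z + a • (t * (1 - e)))).encard ≤ srank s := by
    have : z + a • (t * (1 - e)) =
        (z * (B * Polynomial.aeval t p') * x + a • ((1 - e) * x)) * s := by
      rw [add_mul, ← hzs, htf'.eq, smul_mul_assoc, mul_assoc (1 - e), ← ht]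
    rw [this]
    exact aux_le_srank s _
  rw [hun, Set.encard_union_eq hdisj, aux_smul ha0,
    (mul_right_injective₀ ha0).encard_image] at hle
  have h5 := hle.trans hN2
  rw [← Set.encard_le_one_iff_subsingleton]
  exact (ENat.add_le_add_iff_right (Set.encard_ne_top_iff.2 hN2f)).1 h5

theorem aux_corner_unit {e z : A} (he : e * e = e) (hez : e * z = z) (hze : z * e = z)
    {c d : ℂ} (hc : c ≠ 0) (hd : d ≠ 0) (h : IsUnit (z + c • (1 - e))) :
    IsUnit (z + d • (1 - e)) := by
  have hff : (1 - e) * (1 - e) = 1 - e := by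
    rw [sub_mul, mul_sub, mul_sub, he]; simp
  have hef : e * (1 - e) = 0 := by rw [mul_sub, he]; simp
  have hfe : (1 - e) * e = 0 := by rw [sub_mul, he]; simp
  have hzf : z * (1 - e) = 0 := by rw [mul_sub, hze]; simp
  have hu : IsUnit (e + (d / c) • (1 - e)) := by
    refine ⟨⟨_, e + (c / d) • (1 - e), ?_, ?_⟩, rfl⟩
    · simp only [mul_add, add_mul, smul_mul_assoc, mul_smul_comm, hff, hef, hfe, he, smul_smul,
        smul_zero, zero_add, add_zero]
      rw [show (c / d) * (d / c) = 1 by field_simp]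
      simp
    · simp only [mul_add, add_mul, smul_mul_assoc, mul_smul_comm, hff, hef, hfe, he, smul_smul,
        smul_zero, zero_add, add_zero]
      rw [show (d / c) * (c / d) = 1 by field_simp]
      simp
  have := h.mul hu
  simp only [mul_add, add_mul, smul_mul_assoc, mul_smul_comm, hff, hfe, hze, hzf, smul_smul,
    smul_zero, zero_add, add_zero] at this
  rw [show (d / c) * c = d by field_simp] at this
  simpa using this

theorem aux_min (hss : JacobsonSemisimple A) {e : A} (he0 : e ≠ 0) (he : e * e = e)
    (H : ∀ z, e * z = z → z * e = z → (nzSpec z).Subsingleton) (x : A) :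
    ∃ c : ℂ, e * x * e = c • e := by
  have hff : (1 - e) * (1 - e) = 1 - e := by
    rw [sub_mul, mul_sub, mul_sub, he]; simp
  have hef : e * (1 - e) = 0 := by rw [mul_sub, he]; simp
  have hfe : (1 - e) * e = 0 := by rw [sub_mul, he]; simp
  -- a corner element has at most one corner spectral value
  have H2 : ∀ z, e * z = z → z * e = z → ∀ l m : ℂ, l ≠ m →
      ¬ IsUnit (z - l • e + (1 : ℂ) • (1 - e)) → IsUnit (z - m • e + (1 : ℂ) • (1 - e)) := by
    intro z hez hze l m hlm hl
    by_contra hm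
    obtain ⟨b, hb⟩ := (((Set.finite_singleton (-m)).insert (-l))).exists_notMem
    simp only [Set.mem_insert_iff, Set.mem_singleton_iff, not_or] at hb
    have key : ∀ k : ℂ, b ≠ -k → ¬ IsUnit (z - k • e + (1 : ℂ) • (1 - e)) →
        k + b ∈ nzSpec (z + b • e) := by
      intro k hk hnu
      have hkb : k + b ≠ 0 := fun h => hk (by linear_combination h)
      rw [aux_mem_nzSpec]
      refine ⟨hkb, fun hu => hnu ?_⟩
      refine aux_corner_unit he ?_ ?_ (neg_ne_zero.2 hkb) one_ne_zero ?_
      · rw [mul_sub, hez, mul_smul_comm, he]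
      · rw [sub_mul, hze, smul_mul_assoc, he]
      · rw [← IsUnit.neg_iff] at hu
        convert hu using 1
        simp only [smul_sub, neg_smul, add_smul]
        abel
    have h3 := H (z + b • e) (by rw [mul_add, hez, mul_smul_comm, he])
      (by rw [add_mul, hze, smul_mul_assoc, he]) (key l hb.1 hl) (key m hb.2 hm)
    exact hlm (add_right_cancel h3)
  -- nonzero spectral values are corner spectral values
  have H3 : ∀ z, e * z = z → z * e = z → ∀ l ∈ nzSpec z,
      ¬ IsUnit (z - l • e + (1 : ℂ) • (1 - e)) := by
    intro z hez hze l hl hu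
    rw [aux_mem_nzSpec] at hl
    apply hl.2
    have := aux_corner_unit he (by rw [mul_sub, hez, mul_smul_comm, he])
      (by rw [sub_mul, hze, smul_mul_assoc, he]) one_ne_zero (neg_ne_zero.2 hl.1) hu
    rw [← IsUnit.neg_iff]
    convert this using 1
    simp only [smul_sub, neg_smul]
    abel
  obtain ⟨z, hz⟩ : ∃ z, z = e * x * e := ⟨_, rfl⟩
  have hez : e * z = z := by rw [hz, ← mul_assoc, ← mul_assoc, he]
  have hze : z * e = z := by rw [hz, mul_assoc, he]
  rw [← hz]
  -- the quasinilpotent part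
  obtain ⟨l, hl⟩ : ∃ l : ℂ, nzSpec (z - l • e) = ∅ := by
    by_cases h : nzSpec z = ∅
    · exact ⟨0, by simpa using h⟩
    · obtain ⟨l, hl⟩ := Set.nonempty_iff_ne_empty.2 h
      refine ⟨l, ?_⟩
      rw [Set.eq_empty_iff_forall_notMem]
      intro m hm
      have h1 := H3 z hez hze l hl
      have h2 := H3 (z - l • e) (by rw [mul_sub, hez, mul_smul_comm, he])
        (by rw [sub_mul, hze, smul_mul_assoc, he]) m hm
      have hm0 : m ≠ 0 := hm.2
      rw [sub_sub, ← add_smul] at h2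
      exact h2 (H2 z hez hze l (l + m) (by simpa using hm0) h1)
  refine ⟨l, ?_⟩
  rw [← sub_eq_zero]
  obtain ⟨q, hqd⟩ : ∃ q, q = z - l • e := ⟨_, rfl⟩
  have heq : e * q = q := by rw [hqd, mul_sub, hez, mul_smul_comm, he]
  have hqe : q * e = q := by rw [hqd, sub_mul, hze, smul_mul_assoc, he]
  rw [← hqd] at hl ⊢
  by_contra hq0
  apply hq0
  apply aux_ss hss
  intro y
  by_contra hne
  obtain ⟨m, hm⟩ := Set.nonempty_iff_ne_empty.2 hne
  have hm0 : m ≠ 0 := hm.2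
  obtain ⟨v, hv⟩ : ∃ v, v = e * y * e := ⟨_, rfl⟩
  have hev : e * v = v := by rw [hv, ← mul_assoc, ← mul_assoc, he]
  have hve : v * e = v := by rw [hv, mul_assoc, he]
  have hqv : nzSpec (q * y) = nzSpec (q * v) := by
    have e1 : q * y = e * (q * y) := by rw [← mul_assoc, heq]
    have e2 : q * v = (q * y) * e := by rw [hv, ← mul_assoc, ← mul_assoc, hqe]
    rw [e2, aux_nz_comm (q * y) e, ← e1]
  rw [hqv] at hm
  have hu := H2 (q * v) (by rw [← mul_assoc, heq]) (by rw [mul_assoc, hve]) m 0 hm0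
    (H3 (q * v) (by rw [← mul_assoc, heq]) (by rw [mul_assoc, hve]) m hm)
  rw [zero_smul, sub_zero, one_smul] at hu
  obtain ⟨h, hh⟩ := hu.exists_right_inv
  obtain ⟨w, hw⟩ : ∃ w, w = v * h * e := ⟨_, rfl⟩
  have hew : e * w = w := by rw [hw, ← mul_assoc, ← mul_assoc, hev]
  have hwe : w * e = w := by rw [hw, mul_assoc, he]
  have hqw : q * w = e := by
    have h1 : e * ((q * v + (1 - e)) * h) * e = e := by rw [hh, mul_one, he]
    rw [← mul_assoc, mul_add, hef, add_zero, ← mul_assoc, heq] at h1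
    rw [hw]
    simpa only [mul_assoc] using h1
  have hf : (w * q) * (w * q) = w * q := by
    rw [mul_assoc, ← mul_assoc q, hqw, heq]
  have hef' : e * (w * q) = w * q := by rw [← mul_assoc, hew]
  have hfe' : (w * q) * e = w * q := by rw [mul_assoc, hqe]
  have hwq : w * q = e := by
    by_contra hne'
    by_cases hf0 : w * q = 0
    · apply hq0
      rw [← heq, ← hqw, mul_assoc, hf0, mul_zero]
    · have hg0 : e - w * q ≠ 0 := fun h => hne' (sub_eq_zero.1 h).symm
      have hg : (e - w * q) * (e - w * q) = e - w * q := by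
        rw [sub_mul, mul_sub, mul_sub, he, hef', hfe', hf]; simp
      have h1 := aux_one_mem hf hf0
      have h2 : (2 : ℂ) ∈ nzSpec ((2 : ℂ) • (e - w * q)) := by
        rw [aux_smul two_ne_zero]
        exact ⟨1, aux_one_mem hg hg0, by norm_num⟩
      have h3 : nzSpec (w * q + (2 : ℂ) • (e - w * q)) = _ := aux_orth
        (by rw [mul_smul_comm, mul_sub, hfe', hf]; simp)
        (by rw [smul_mul_assoc, sub_mul, hef', hf]; simp)
      have h4 := H (w * q + (2 : ℂ) • (e - w * q))
        (by rw [mul_add, mul_smul_comm, mul_sub, he, hef'])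
        (by rw [add_mul, smul_mul_assoc, sub_mul, he, hfe'])
      rw [h3] at h4
      have h5 := h4 (Or.inl h1) (Or.inr h2)
      norm_num at h5
  have h6 := aux_qn_mul hl (x := w) (hwq.trans hqw.symm)
  rw [hwq] at h6
  have := aux_one_mem he he0
  rw [h6] at this
  exact this

theorem aux_zero : nzSpec (0 : A) = ∅ := by
  rw [Set.eq_empty_iff_forall_notMem]
  intro c hc
  rw [aux_mem_nzSpec, sub_zero, ← Algebra.algebraMap_eq_smul_one] at hc
  exact hc.2 ((IsUnit.mk0 c hc.1).map (algebraMap ℂ A))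

theorem aux_smul_idem {e : A} (he : e * e = e) (he0 : e ≠ 0) (c k : ℂ) :
    k ∈ nzSpec (c • e) ↔ k = c ∧ c ≠ 0 := by
  by_cases hc : c = 0
  · simp [hc, aux_zero]
  · have h1 : nzSpec e = {1} := by
      refine Set.Subset.antisymm ?_ (by simpa using aux_one_mem he he0)
      have := aux_te (t := 1) (l := 1) he (Commute.one_left e) (by simp [aux_zero])
      simpa using this
    rw [aux_smul hc, h1]
    simp [hc]

end helpers

theorem prime_iff_nzSpec_subset_uniqueness
    {A : Type*} [NormedRing A] [NormOneClass A] [NormedAlgebra ℂ A] [CompleteSpace A]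
    (hss : JacobsonSemisimple A) (hsoc : socle A ≠ {0}) :
    IsPrimeAlgebra A ↔
      ∀ a b : A, a ≠ 0 → b ≠ 0 →
        ((∀ x : A, nzSpec (a * x) ⊆ nzSpec (b * x)) ↔ a = b) := by
  constructor
  · intro hp a b ha hb
    refine ⟨fun hsub => ?_, fun h x => by rw [h]⟩
    obtain ⟨s, hs, hs0⟩ : ∃ s ∈ socle A, s ≠ 0 := by
      by_contra! hcon
      apply hsoc
      ext s
      refine ⟨fun h => hcon s h, fun h => ?_⟩
      rw [Set.mem_singleton_iff] at h
      have h1 : ∀ x : A, nzSpec (x * s) = ∅ := fun x => by rw [h, mul_zero, aux_zero]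
      simp [socle, srank, h1]
    obtain ⟨e, he0, he, H⟩ := aux_exists_e hss hs0 hs
    choose f hf using aux_min hss he0 he H
    have hinj : ∀ c d : ℂ, c • e = d • e → c = d := fun c d h => smul_left_injective ℂ he0 h
    have hfadd : ∀ x y, f (x + y) = f x + f y := fun x y => by
      apply hinj
      rw [← hf, add_smul, ← hf, ← hf, mul_add, add_mul]
    have hspec : ∀ c y z : A, nzSpec (c * (y * e * z)) = nzSpec (f (z * c * y) • e) := by
      intro c y z
      rw [← hf]
      have e2 : c * (y * e * z) = (c * y * e) * (e * z) := by
        rw [show (c * y * e) * (e * z) = c * y * (e * e) * z by simp only [mul_assoc], he]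
        simp only [mul_assoc]
      rw [e2, aux_nz_comm]
      simp only [mul_assoc]
    have key : ∀ y z : A, f (z * a * y) ≠ 0 → f (z * a * y) = f (z * b * y) := by
      intro y z hne
      have h1 : f (z * a * y) ∈ nzSpec (a * (y * e * z)) := by
        rw [hspec, aux_smul_idem he he0]
        exact ⟨rfl, hne⟩
      have h2 := hsub _ h1
      rw [hspec, aux_smul_idem he he0] at h2
      exact h2.1
    -- primeness in the form needed
    have hprime : ∀ c : A, (∀ y z, f (z * c * y) = 0) → c = 0 := by
      intro c hc
      have h1 : ∀ y, c * y * e = 0 := by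
        intro y
        refine (aux_prime hp (e := e) (c := c * y * e) fun z => ?_).resolve_left he0
        have h2 := hf (z * c * y)
        rw [hc, zero_smul] at h2
        rw [← h2]
        simp only [mul_assoc]
      exact (aux_prime hp h1).resolve_right he0
    obtain ⟨y0, z0, h0⟩ : ∃ y z, f (z * a * y) ≠ 0 := by
      by_contra! hcon
      exact ha (hprime a hcon)
    -- step 1: extend in the left variable
    have step1 : ∀ y z z' : A, f (z' * a * y) ≠ 0 → f (z * a * y) = f (z * b * y) := by
      intro y z z' hne
      by_cases h1 : f (z * a * y) = 0
      · have h2 := key y (z + z')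
        have h3 := key y z' hne
        simp only [add_mul, hfadd, h1, zero_add] at h2
        have h4 := h2 hne
        rw [h1]
        linear_combination h4 - h3
      · exact key y z h1
    have step2 : ∀ y z : A, f (z * a * y) = f (z * b * y) := by
      intro y z
      by_cases h1 : f (z0 * a * y) = 0
      · have h2 := step1 (y + y0) z z0 (by rw [mul_add, hfadd, h1, zero_add]; exact h0)
        have h3 := step1 y0 z z0 h0
        simp only [mul_add, hfadd] at h2
        linear_combination h2 - h3
      · exact step1 y z z0 h1
    rw [← sub_eq_zero]
    apply hprime
    intro y z
    have h1 := hfadd (z * (a - b) * y) (z * b * y)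
    rw [show z * (a - b) * y + z * b * y = z * a * y by noncomm_ring, step2] at h1
    linear_combination -h1
  · intro h I J hI hJ
    by_contra! hcon
    have hex : ∀ K : TwoSidedIdeal A, K ≠ ⊥ → ∃ x ∈ K, x ≠ 0 := by
      intro K hK
      by_contra! hc
      apply hK
      ext x
      rw [TwoSidedIdeal.mem_bot]
      exact ⟨hc x, fun h => h ▸ K.zero_mem⟩
    -- an element with `a z a = 0` for all `z` vanishes
    have hsp : ∀ a : A, (∀ z, a * z * a = 0) → a = 0 := by
      intro a ha
      apply aux_ss hss
      intro x
      rw [Set.eq_empty_iff_forall_notMem]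
      intro c hc
      rw [aux_mem_nzSpec] at hc
      apply hc.2
      have h1 : (a * x) * (a * x) = 0 := by rw [← mul_assoc, ha, zero_mul]
      have h2 : (c⁻¹ * c⁻¹) * c = c⁻¹ := by field_simp [hc.1]
      have h3 : c * (c⁻¹ * c⁻¹) = c⁻¹ := by rw [mul_comm]; exact h2
      refine ⟨⟨_, c⁻¹ • (1 : A) + (c⁻¹ * c⁻¹) • (a * x), ?_, ?_⟩, rfl⟩
      · simp only [sub_mul, mul_add, smul_mul_assoc, mul_smul_comm, one_mul, mul_one, h1]
        simp only [smul_sub, smul_add, smul_smul, smul_zero, h2, h3, inv_mul_cancel₀ hc.1,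
          mul_inv_cancel₀ hc.1]
        simp
      · simp only [add_mul, mul_sub, smul_mul_assoc, mul_smul_comm, one_mul, mul_one, h1]
        simp only [smul_sub, smul_add, smul_smul, smul_zero, h2, h3, inv_mul_cancel₀ hc.1,
          mul_inv_cancel₀ hc.1]
        simp
    have hIJ : ∀ a, a ∈ I → a ∈ J → a = 0 := fun a haI haJ =>
      hsp a fun z => hcon (a * z) (I.mul_mem_right _ _ haI) a haJ
    have hJI : ∀ y ∈ J, ∀ x ∈ I, y * x = 0 := fun y hy x hx =>
      hIJ _ (I.mul_mem_left _ _ hx) (J.mul_mem_right _ _ hy)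
    obtain ⟨a, haI, ha0⟩ := hex I hI
    obtain ⟨c, hcJ, hc0⟩ := hex J hJ
    have hb0 : a + c ≠ 0 := by
      intro h0
      apply ha0
      apply hIJ a haI
      rw [eq_neg_of_add_eq_zero_left h0]
      exact J.neg_mem hcJ
    have h1 := (h a (a + c) ha0 hb0).1 fun x => by
      rw [add_mul, aux_orth]
      · exact Set.subset_union_left
      · exact hcon _ (I.mul_mem_right _ _ haI) _ (J.mul_mem_right _ _ hcJ)
      · exact hJI _ (J.mul_mem_right _ _ hcJ) _ (I.mul_mem_right _ _ haI)
    exact hc0 (by simpa using h1)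
end
end

section
/- Let A be a complex semisimple unital Banach algebra and let s ∈ A be such that for every x ∈ A the spectrum σ(sx) has at most 0 as an accumulation point. Then every Riesz projection of s corresponding to a nonzero spectral value of s has finite rank (i.e. belongs to Soc A). -/
open Complex

noncomputable section

section Helpers

set_option linter.unusedSectionVars false

open Metric

variable {A : Type*} [NormedRing A] [NormedAlgebra ℂ A] [CompleteSpace A]

lemma circ_mul_left (a : A) (f : ℂ → A) (c : ℂ) (R : ℝ) (hf : CircleIntegrable f c R) :
    (∮ z in C(c, R), a * f z) = a * ∮ z in C(c, R), f z := by
  have h := ContinuousLinearMap.intervalIntegral_comp_comm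
    (ContinuousLinearMap.mul ℂ A a) hf.out
  simp only [circleIntegral]
  simpa [mul_smul_comm] using h

lemma circ_mul_right (a : A) (f : ℂ → A) (c : ℂ) (R : ℝ) (hf : CircleIntegrable f c R) :
    (∮ z in C(c, R), f z * a) = (∮ z in C(c, R), f z) * a := by
  have h := ContinuousLinearMap.intervalIntegral_comp_comm
    ((ContinuousLinearMap.mul ℂ A).flip a) hf.out
  simp only [circleIntegral]
  simpa [smul_mul_assoc] using h

/-- The Riesz projection. -/
def rproj (s : A) (lam : ℂ) (r : ℝ) : A :=
  (2 * Real.pi * Complex.I : ℂ)⁻¹ • circleIntegral (fun z => resolvent s z) lam r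

lemma two_pi_ne : (2 * Real.pi * Complex.I : ℂ) ≠ 0 := by
  simp [Real.pi_ne_zero]

lemma res_mul_left (a : A) (z m : ℂ) (hz : z ∉ spectrum ℂ a) :
    (algebraMap ℂ A m - a) * resolvent a z = 1 - (z - m) • resolvent a z := by
  have h1 : (algebraMap ℂ A z - a) * resolvent a z = 1 :=
    Ring.mul_inverse_cancel _ (by simpa [spectrum.mem_iff] using hz)
  have : (algebraMap ℂ A m - a) = (algebraMap ℂ A z - a) - (z - m) • (1 : A) := by
    rw [Algebra.algebraMap_eq_smul_one, Algebra.algebraMap_eq_smul_one, sub_smul]; abel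
  rw [this, sub_mul, h1, smul_mul_assoc, one_mul]

lemma res_mul_right (a : A) (z m : ℂ) (hz : z ∉ spectrum ℂ a) :
    resolvent a z * (algebraMap ℂ A m - a) = 1 - (z - m) • resolvent a z := by
  have h1 : resolvent a z * (algebraMap ℂ A z - a) = 1 :=
    Ring.inverse_mul_cancel _ (by simpa [spectrum.mem_iff] using hz)
  have : (algebraMap ℂ A m - a) = (algebraMap ℂ A z - a) - (z - m) • (1 : A) := by
    rw [Algebra.algebraMap_eq_smul_one, Algebra.algebraMap_eq_smul_one, sub_smul]; abel
  rw [this, mul_sub, h1, mul_smul_comm, mul_one]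

lemma res_cont (a : A) (S : Set ℂ) (hS : ∀ z ∈ S, z ∉ spectrum ℂ a) :
    ContinuousOn (fun z => resolvent a z) S := fun z hz =>
  (spectrum.hasDerivAt_resolvent_const_left (𝕜 := ℂ) (a := a) (k := z)
    (by simpa [spectrum] using hS z hz)).continuousAt.continuousWithinAt

section
variable {a : A} {lam : ℂ} {r : ℝ} (hr : 0 < r)
    (hsep : ∀ z ∈ spectrum ℂ a, ‖z - lam‖ ≤ r → z = lam)

include hr hsep

lemma notmem_of {z : ℂ} (h1 : z ≠ lam) (h2 : ‖z - lam‖ ≤ r) : z ∉ spectrum ℂ a :=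
  fun h => h1 (hsep z h h2)

lemma notmem_sphere {z : ℂ} (h : z ∈ sphere lam r) : z ∉ spectrum ℂ a := by
  rw [mem_sphere, dist_eq_norm] at h
  refine notmem_of hr hsep ?_ h.le
  rintro rfl
  simp at h; exact hr.ne h

/-- Cauchy transform of the resolvent. -/
lemma cauchy_left {m : ℂ} (hm : m ∉ sphere lam r) :
    (algebraMap ℂ A m - a) * ((2 * Real.pi * Complex.I : ℂ)⁻¹ •
      ∮ z in C(lam, r), (z - m)⁻¹ • resolvent a z) =
      (2 * Real.pi * Complex.I : ℂ)⁻¹ • (∮ z in C(lam, r), (z - m)⁻¹) • (1 : A)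
        - rproj a lam r ∧
    ((2 * Real.pi * Complex.I : ℂ)⁻¹ •
      ∮ z in C(lam, r), (z - m)⁻¹ • resolvent a z) * (algebraMap ℂ A m - a) =
      (2 * Real.pi * Complex.I : ℂ)⁻¹ • (∮ z in C(lam, r), (z - m)⁻¹) • (1 : A)
        - rproj a lam r := by
  have hne : ∀ z ∈ sphere lam r, z - m ≠ 0 := by
    intro z hz h
    rw [sub_eq_zero] at h
    exact hm (h ▸ hz)
  have c0 : ContinuousOn (fun z : ℂ => (z - m)⁻¹) (sphere lam r) :=
    ContinuousOn.inv₀ (by fun_prop) hne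
  have c1 := res_cont a (sphere lam r) (fun z hz => notmem_sphere hr hsep hz)
  have i1 : CircleIntegrable (fun z => resolvent a z) lam r := c1.circleIntegrable hr.le
  have i2 : CircleIntegrable (fun z => (z - m)⁻¹ • resolvent a z) lam r :=
    (c0.smul c1).circleIntegrable hr.le
  have i3 : CircleIntegrable (fun z => (z - m)⁻¹ • (1 : A)) lam r :=
    (c0.smul continuousOn_const).circleIntegrable hr.le
  have key : (∮ z in C(lam, r), ((z - m)⁻¹ • (1 : A) - resolvent a z)) =
      (∮ z in C(lam, r), (z - m)⁻¹) • (1 : A) - ∮ z in C(lam, r), resolvent a z := by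
    rw [circleIntegral.integral_sub i3 i1, circleIntegral.integral_smul_const]
  unfold rproj
  rw [← smul_sub, ← key, mul_smul_comm, smul_mul_assoc, ← circ_mul_left _ _ _ _ i2,
    ← circ_mul_right _ _ _ _ i2]
  constructor
  · congr 1
    refine circleIntegral.integral_congr hr.le fun z hz => ?_
    simp only [mul_smul_comm]
    rw [res_mul_left a z m (notmem_sphere hr hsep hz), smul_sub, smul_smul,
      inv_mul_cancel₀ (hne z hz), one_smul]
  · congr 1
    refine circleIntegral.integral_congr hr.le fun z hz => ?_
    simp only [smul_mul_assoc]
    rw [res_mul_right a z m (notmem_sphere hr hsep hz), smul_sub, smul_smul,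
      inv_mul_cancel₀ (hne z hz), one_smul]

lemma rproj_ne_zero (h : lam ∈ spectrum ℂ a) : rproj a lam r ≠ 0 := by
  intro h0
  have hm : lam ∉ sphere lam r := by simp [hr.ne]
  obtain ⟨h1, h2⟩ := cauchy_left hr hsep hm
  rw [h0, circleIntegral.integral_sub_center_inv _ hr.ne', smul_smul, inv_mul_cancel₀ two_pi_ne,
    one_smul, sub_zero] at h1 h2
  exact h ⟨⟨_, _, h1, h2⟩, rfl⟩

lemma rproj_factor (h0 : lam ≠ 0) : ∃ y, rproj a lam r = a * y ∧ rproj a lam r = y * a := by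
  by_cases h : (0 : ℂ) ∈ spectrum ℂ a
  · have hlt : r < ‖lam‖ := by
      by_contra hcon
      exact h0 (hsep 0 h (by simpa using hcon)).symm
    have hm : (0 : ℂ) ∉ sphere lam r := by
      simp [mem_sphere, dist_eq_norm, hlt.ne']
    obtain ⟨h1, h2⟩ := cauchy_left hr hsep hm
    have hz : (∮ z in C(lam, r), (z - 0)⁻¹) = 0 := by
      have hne : ∀ z ∈ closedBall lam r, z - 0 ≠ 0 := by
        intro z hz hz0
        rw [sub_zero] at hz0
        subst hz0
        rw [mem_closedBall, dist_eq_norm] at hz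
        simp at hz
        linarith
      refine Complex.circleIntegral_eq_zero_of_differentiable_on_off_countable hr.le
        Set.countable_empty (ContinuousOn.inv₀ (by fun_prop) hne) fun z hz => ?_
      exact DifferentiableAt.inv (by fun_prop) (hne z (ball_subset_closedBall hz.1))
    rw [hz] at h1 h2
    simp only [map_zero, zero_sub, zero_smul, smul_zero, neg_mul, mul_neg, neg_inj] at h1 h2
    exact ⟨_, h1.symm, h2.symm⟩
  · have hu : IsUnit a := by simpa [spectrum.zero_mem_iff] using h
    obtain ⟨u, rfl⟩ := hu
    refine ⟨(↑u⁻¹ : A) * rproj (u : A) lam r, by simp, ?_⟩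
    have hc : Commute (rproj (u : A) lam r) (u : A) := by
      have hm : lam ∉ sphere lam r := by simp [hr.ne]
      have c1 := res_cont (u : A) (sphere lam r) (fun z hz => notmem_sphere hr hsep hz)
      have i1 : CircleIntegrable (fun z => resolvent (u : A) z) lam r := c1.circleIntegrable hr.le
      unfold rproj
      rw [Commute, SemiconjBy, mul_smul_comm, smul_mul_assoc, ← circ_mul_left _ _ _ _ i1,
        ← circ_mul_right _ _ _ _ i1]
      congr 1
      refine circleIntegral.integral_congr hr.le fun z hz => ?_
      have e1 := res_mul_left (u : A) z 0 (notmem_sphere hr hsep hz)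
      have e2 := res_mul_right (u : A) z 0 (notmem_sphere hr hsep hz)
      rw [← e2] at e1
      simpa using e1.symm
    rw [mul_assoc, hc.eq]
    simp

lemma rproj_idem : rproj a lam r * rproj a lam r = rproj a lam r := by
  set q := rproj a lam r with hq
  have c1 := res_cont a (sphere lam r) (fun z hz => notmem_sphere hr hsep hz)
  have i1 : CircleIntegrable (fun z => resolvent a z) lam r := c1.circleIntegrable hr.le
  set S : ℂ → A := fun m => (2 * Real.pi * Complex.I : ℂ)⁻¹ •
      ∮ z in C(lam, r), (z - m)⁻¹ • resolvent a z with hS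
  let R0 : NNReal := ⟨r, hr.le⟩
  have hps := hasFPowerSeriesOn_cauchy_integral (f := fun z => resolvent a z) (c := lam)
    (R := R0) i1 (by exact_mod_cast hr)
  have hdS : DifferentiableOn ℂ S (ball lam r) := by
    have := hps.differentiableOn
    intro z hz
    refine (this.differentiableAt (Metric.isOpen_eball.mem_nhds ?_)).differentiableWithinAt
    have e := Metric.eball_coe (x := lam) (ε := R0)
    rw [e]
    exact hz
  have hr2 : 0 < r / 2 := by linarith
  have hr2' : r / 2 < r := by linarith
  have hSz : (∮ z in C(lam, r / 2), S z) = 0 := by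
    refine Complex.circleIntegral_eq_zero_of_differentiable_on_off_countable hr2.le
        Set.countable_empty (hdS.continuousOn.mono (closedBall_subset_ball hr2')) fun z hz => ?_
    exact hdS.differentiableAt (isOpen_ball.mem_nhds (ball_subset_ball hr2'.le hz.1))
  have hSeq : ∀ z ∈ sphere lam (r / 2), S z = resolvent a z * (1 - q) := by
    intro z hz
    have hzb : z ∈ ball lam r := by
      rw [mem_sphere] at hz; rw [mem_ball, hz]; exact hr2'
    have hzs : z ∉ sphere lam r := by
      rw [mem_ball] at hzb; rw [mem_sphere]; exact hzb.ne
    have h1 := (cauchy_left hr hsep hzs).1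
    rw [circleIntegral.integral_sub_inv_of_mem_ball hzb, smul_smul, inv_mul_cancel₀ two_pi_ne,
      one_smul, ← hq] at h1
    have hns : z ∉ spectrum ℂ a := by
      refine notmem_of hr hsep ?_ ?_
      · rintro rfl
        simp at hz; linarith
      · rw [mem_ball, dist_eq_norm] at hzb; exact hzb.le
    have h2 : resolvent a z * (algebraMap ℂ A z - a) = 1 :=
      Ring.inverse_mul_cancel _ (by simpa [spectrum.mem_iff] using hns)
    rw [← h1, ← mul_assoc, h2, one_mul]
  have hsub : ∀ z ∈ closedBall lam r \ ball lam (r/2), z ∉ spectrum ℂ a := by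
    intro z hz
    refine notmem_of hr hsep ?_ ?_
    · rintro rfl
      exact hz.2 (mem_ball_self hr2)
    · rw [← dist_eq_norm]; exact hz.1
  have hann : (∮ z in C(lam, r), resolvent a z) = ∮ z in C(lam, r / 2), resolvent a z := by
    refine Complex.circleIntegral_eq_of_differentiable_on_annulus_off_countable hr2 hr2'.le
      Set.countable_empty (res_cont a _ hsub) fun z hz => ?_
    refine (spectrum.hasDerivAt_resolvent_const_left (𝕜 := ℂ) (a := a) (k := z)
      ?_).differentiableAt
    have := hsub z ⟨ball_subset_closedBall hz.1.1, fun h => hz.1.2 (ball_subset_closedBall h)⟩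
    simpa [spectrum] using this
  have i2 : CircleIntegrable (fun z => resolvent a z) lam (r / 2) :=
    (res_cont a _ fun z hz => hsub z ⟨sphere_subset_closedBall.trans
      (closedBall_subset_closedBall hr2'.le) hz, fun h => by
        rw [mem_sphere] at hz; rw [mem_ball, hz] at h; exact lt_irrefl _ h⟩).circleIntegrable hr2.le
  rw [circleIntegral.integral_congr hr2.le hSeq, circ_mul_right _ _ _ _ i2, ← hann] at hSz
  have : q * (1 - q) = 0 := by
    have h3 : q = (2 * Real.pi * Complex.I : ℂ)⁻¹ • ∮ z in C(lam, r), resolvent a z := rfl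
    calc q * (1 - q) = ((2 * Real.pi * Complex.I : ℂ)⁻¹ • ∮ z in C(lam, r), resolvent a z) *
          (1 - q) := by rw [← h3]
      _ = 0 := by rw [smul_mul_assoc, hSz, smul_zero]
  rw [mul_sub, mul_one, sub_eq_zero] at this
  exact this.symm

end

/-- elements of the radical vanish -/
lemma rad_zero (hss : JacobsonSemisimple A) (b : A)
    (h : ∀ a : A, (1 : ℂ) ∉ spectrum ℂ (a * b)) : b = 0 := by
  have : b ∈ TwoSidedIdeal.jacobson (⊥ : TwoSidedIdeal A) := by
    rw [TwoSidedIdeal.mem_jacobson_iff]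
    intro y
    have h1 := h (-y)
    rw [spectrum.mem_iff, not_not] at h1
    obtain ⟨u, hu⟩ := h1
    refine ⟨(↑u⁻¹ : A), ?_⟩
    have h2 : (↑u⁻¹ : A) * (u : A) = 1 := by simp
    rw [hu] at h2
    rw [TwoSidedIdeal.mem_bot, sub_eq_zero, ← h2]
    simp only [map_one]
    noncomm_ring
  rw [hss] at this
  simpa [TwoSidedIdeal.mem_bot] using this

/-- `b` lies in the corner of `e`. -/
def InCorner (e b : A) : Prop := e * b = b ∧ b * e = b

def FinSpec (p : A) : Prop := ∀ b, InCorner p b → (spectrum ℂ b).Finite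

def Primitive (e : A) : Prop := ∀ f, f * f = f → InCorner e f → f = 0 ∨ f = e

def MinIdem (e : A) : Prop := ∀ x : A, ∃ c : ℂ, e * x * e = c • e

lemma InCorner.trans {e f b : A} (h : InCorner e f) (h' : InCorner f b) : InCorner e b :=
  ⟨by rw [← h'.1, ← mul_assoc, h.1], by rw [← h'.2, mul_assoc, h.2]⟩

lemma corner_shift {p b : A} (hp : p * p = p) (hb : InCorner p b) {m c : ℂ} (hm : m ≠ 0)
    (h : m ∈ spectrum ℂ b) : m + c ∈ spectrum ℂ (b + c • p) := by
  obtain ⟨h1, h2⟩ := hb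
  intro hu
  obtain ⟨u, hu⟩ := hu
  apply h
  set w : A := algebraMap ℂ A (m + c) - (b + c • p) with hw
  have hwp : w * p = m • p - b := by
    rw [hw, Algebra.algebraMap_eq_smul_one, sub_mul, add_mul, smul_mul_assoc, smul_mul_assoc, hp,
      h2, one_mul, add_smul]; abel
  have hpw : p * w = m • p - b := by
    rw [hw, Algebra.algebraMap_eq_smul_one, mul_sub, mul_add, mul_smul_comm, mul_smul_comm, hp,
      h1, mul_one, add_smul]; abel
  have u1 : w * (↑u⁻¹ : A) = 1 := by rw [← hu]; simp
  have u2 : (↑u⁻¹ : A) * w = 1 := by rw [← hu]; simp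
  set v : A := (↑u⁻¹ : A)
  have hm1 : algebraMap ℂ A m - b = w * p + m • (1 - p) := by
    rw [hwp, Algebra.algebraMap_eq_smul_one, smul_sub]; abel
  have hm2 : algebraMap ℂ A m - b = p * w + m • (1 - p) := by
    rw [hpw, Algebra.algebraMap_eq_smul_one, smul_sub]; abel
  have hpp : p * (1 - p) = 0 := by rw [mul_sub, hp, mul_one, sub_self]
  have hpp' : (1 - p) * p = 0 := by rw [sub_mul, hp, one_mul, sub_self]
  have hqq : (1 - p) * (1 - p) = 1 - p := by rw [mul_sub, hpp', mul_one, sub_zero]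
  have hcomm : p * v = v * p := by
    calc p * v = v * (w * p) * v := by rw [← mul_assoc v, u2, one_mul]
      _ = v * (p * w) * v := by rw [hwp, hpw]
      _ = v * p * (w * v) := by simp only [mul_assoc]
      _ = v * p := by rw [u1, mul_one]
  refine ⟨⟨algebraMap ℂ A m - b, p * v + m⁻¹ • (1 - p), ?_, ?_⟩, rfl⟩
  · rw [hm2, add_mul, mul_add, mul_add]
    have t1 : p * w * (p * v) = p := by
      rw [hpw, ← hwp, hcomm]
      calc w * p * (v * p) = w * (p * v) * p := by simp only [mul_assoc]
        _ = (w * v) * (p * p) := by rw [hcomm]; simp only [mul_assoc]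
        _ = p := by rw [u1, hp, one_mul]
    have t2 : p * w * (m⁻¹ • (1 - p)) = 0 := by
      rw [hpw, ← hwp, mul_smul_comm, mul_assoc, hpp, mul_zero, smul_zero]
    have t3 : (m • (1 - p)) * (p * v) = 0 := by
      rw [smul_mul_assoc, ← mul_assoc, hpp', zero_mul, smul_zero]
    have t4 : (m • (1 - p)) * (m⁻¹ • (1 - p)) = 1 - p := by
      rw [smul_mul_smul_comm, hqq, mul_inv_cancel₀ hm, one_smul]
    rw [t1, t2, t3, t4]; abel
  · rw [hm1, hcomm, add_mul, mul_add, mul_add]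
    have t1 : v * p * (w * p) = p := by
      rw [hwp, ← hpw, ← hcomm]
      calc p * v * (p * w) = p * (v * p) * w := by simp only [mul_assoc]
        _ = (p * p) * (v * w) := by rw [← hcomm]; simp only [mul_assoc]
        _ = p := by rw [u2, hp, mul_one]
    have t2 : v * p * (m • (1 - p)) = 0 := by
      rw [mul_smul_comm, mul_assoc, hpp, mul_zero, smul_zero]
    have t3 : (m⁻¹ • (1 - p)) * (w * p) = 0 := by
      rw [hwp, ← hpw, smul_mul_assoc, ← mul_assoc, hpp', zero_mul, smul_zero]
    have t4 : (m⁻¹ • (1 - p)) * (m • (1 - p)) = 1 - p := by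
      rw [smul_mul_smul_comm, hqq, inv_mul_cancel₀ hm, one_smul]
    rw [t1, t2, t3, t4]; abel

lemma finSpec_of [NormOneClass A] {p s y : A} (hp : p * p = p) (hps : p = s * y)
    (hacc : ∀ x : A, ∀ z : ℂ, AccPt z (Filter.principal (spectrum ℂ (s * x))) → z = 0) :
    FinSpec p := by
  intro b hb
  have hacc' : ∀ c, InCorner p c →
      ∀ z : ℂ, AccPt z (Filter.principal (spectrum ℂ c)) → z = 0 := by
    intro c hc z hz
    refine hacc (y * c) z ?_
    rwa [← mul_assoc, ← hps, hc.1]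
  by_contra hinf
  obtain ⟨z, -, hz⟩ := Set.Infinite.exists_accPt_of_subset_isCompact hinf
    (spectrum.isCompact b) subset_rfl
  have hz0 := hacc' b hb z hz
  subst hz0
  have h1 : AccPt (1 : ℂ) (Filter.principal (spectrum ℂ (b + (1 : ℂ) • p))) := by
    rw [accPt_iff_frequently] at hz ⊢
    have ht : Filter.Tendsto (fun w : ℂ => w + 1) (nhds 0) (nhds 1) := by
      have : Continuous (fun w : ℂ => w + 1) := by fun_prop
      simpa using this.tendsto 0
    refine ht.frequently (hz.mono ?_)
    rintro w ⟨hw, hw'⟩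
    exact ⟨by simpa using hw, corner_shift hp hb hw hw'⟩
  exact one_ne_zero (hacc' _ ⟨by rw [mul_add, hb.1, mul_smul_comm, hp],
    by rw [add_mul, hb.2, smul_mul_assoc, hp]⟩ 1 h1)

/-- Dichotomy in a primitive corner. -/
lemma dichotomy {e b : A} (hprim : Primitive e) (hb : InCorner e b)
    (hfin : (spectrum ℂ b).Finite) {m : ℂ} (hm : m ≠ 0) (h : m ∈ spectrum ℂ b) :
    ∃ y, b * y = e ∧ y * b = e := by
  have hcl : IsClosed (spectrum ℂ b \ {m}) := (hfin.subset Set.sdiff_subset).isClosed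
  have hnh : (spectrum ℂ b \ {m})ᶜ ∈ nhds m := hcl.isOpen_compl.mem_nhds (by simp)
  obtain ⟨r, hr, hsub⟩ := Metric.nhds_basis_closedBall.mem_iff.1 hnh
  have hsep : ∀ z ∈ spectrum ℂ b, ‖z - m‖ ≤ r → z = m := by
    intro z hz hzr
    by_contra hne
    exact hsub (by rwa [mem_closedBall, dist_eq_norm]) ⟨hz, hne⟩
  obtain ⟨y, h1, h2⟩ := rproj_factor hr hsep hm
  have hin : InCorner e (rproj b m r) :=
    ⟨by rw [h1, ← mul_assoc, hb.1], by rw [h2, mul_assoc, hb.2]⟩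
  rcases hprim _ (rproj_idem hr hsep) hin with h0 | h0
  · exact absurd h0 (rproj_ne_zero hr hsep h)
  · exact ⟨y, by rw [← h1, h0], by rw [← h2, h0]⟩

lemma corner_zero {e b y : A} (he : e * e = e) (hb : InCorner e b) (h1 : b * y = e)
    (h2 : y * b = e) (hs : ∀ m ∈ spectrum ℂ b, m = 0) : e = 0 := by
  by_contra he0
  have hrad : spectralRadius ℂ b = 0 := by
    unfold spectralRadius
    simp only [ENNReal.iSup_eq_zero]
    intro k hk
    simp [hs k hk]
  have hg := spectrum.pow_nnnorm_pow_one_div_tendsto_nhds_spectralRadius b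
  rw [hrad] at hg
  set M : NNReal := ‖y‖₊ + 1 with hM
  have hM0 : 0 < M := by positivity
  have hpos : (0 : ENNReal) < ((M⁻¹ : NNReal) : ENNReal) := by
    exact_mod_cast inv_pos.2 hM0
  obtain ⟨n, hn, hn1⟩ := ((hg.eventually (gt_mem_nhds hpos)).and
    (Filter.eventually_ge_atTop 1)).exists
  have hn0 : (0 : ℝ) < n := by exact_mod_cast hn1
  have h3 := ENNReal.rpow_lt_rpow hn hn0
  rw [← ENNReal.rpow_mul, one_div, inv_mul_cancel₀ hn0.ne', ENNReal.rpow_one,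
    ENNReal.rpow_natCast] at h3
  have h4 : ‖b ^ n‖₊ < M⁻¹ ^ n := by exact_mod_cast h3
  have h5 : ∀ k : ℕ, b ^ (k + 1) * y ^ (k + 1) = e := by
    intro k
    induction k with
    | zero => simpa using h1
    | succ k ih =>
      calc b ^ (k + 1 + 1) * y ^ (k + 1 + 1) = b * (b ^ (k + 1) * y ^ (k + 1)) * y := by
            rw [pow_succ' b, pow_succ y]; simp only [mul_assoc]
        _ = e := by rw [ih, hb.2, h1]
  obtain ⟨k, rfl⟩ : ∃ k, n = k + 1 := ⟨n - 1, by omega⟩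
  have h6 : ‖e‖₊ ≤ ‖b ^ (k + 1)‖₊ * ‖y‖₊ ^ (k + 1) := by
    rw [← h5 k]
    exact (nnnorm_mul_le _ _).trans (mul_le_mul_right (nnnorm_pow_le' y k.succ_pos) _)
  have h7 : ‖e‖₊ < 1 := by
    have hyM : ‖y‖₊ ^ (k + 1) ≤ M ^ (k + 1) := by
      gcongr; simp [hM]
    calc ‖e‖₊ ≤ ‖b ^ (k + 1)‖₊ * M ^ (k + 1) := h6.trans (by gcongr)
      _ < M⁻¹ ^ (k + 1) * M ^ (k + 1) := by gcongr
      _ = 1 := by rw [← mul_pow, inv_mul_cancel₀ hM0.ne', one_pow]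
  have h8 : ‖e‖ ≤ ‖e‖ * ‖e‖ := by
    conv_lhs => rw [← he]
    exact norm_mul_le e e
  have h9 : ‖e‖ < 1 := by exact_mod_cast h7
  have h10 : 0 < ‖e‖ := norm_pos_iff.2 he0
  nlinarith

lemma minIdem_of_primitive (hss : JacobsonSemisimple A) {p e : A} (hp : FinSpec p)
    (he : e * e = e) (hep : InCorner p e) (hprim : Primitive e) : MinIdem e := by
  by_cases he0 : e = 0
  · intro x; exact ⟨0, by simp [he0]⟩
  -- noninvertible elements vanish
  have key : ∀ b, InCorner e b → (¬ ∃ y, b * y = e ∧ y * b = e) → b = 0 := by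
    intro b hb hni
    apply rad_zero hss
    intro a h1
    have h2 : (1 : ℂ) ∈ spectrum ℂ (e * (a * b)) := by
      have : (1 : ℂ) ∈ spectrum ℂ ((a * b) * e) \ {0} := by
        rw [mul_assoc, hb.2]; exact ⟨h1, by simp⟩
      rw [spectrum.nonzero_mul_comm] at this
      exact this.1
    have hd : InCorner e (e * (a * b)) :=
      ⟨by rw [← mul_assoc, he], by rw [mul_assoc, mul_assoc, hb.2]⟩
    obtain ⟨y, -, hy⟩ := dichotomy hprim hd (hp _ (hep.trans hd)) one_ne_zero h2
    set u : A := e * (y * e * a) * e with hu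
    have hub : u * b = e := by
      calc u * b = e * (y * (e * (a * (e * b)))) := by rw [hu]; simp only [mul_assoc]
        _ = e := by rw [hb.1, hy, he]
    have hue : u * e = u := by rw [hu, mul_assoc, he]
    have hfi : (b * u) * (b * u) = b * u := by
      calc (b * u) * (b * u) = b * (u * b) * u := by simp only [mul_assoc]
        _ = b * u := by rw [hub, hb.2]
    have hfc : InCorner e (b * u) := ⟨by rw [← mul_assoc, hb.1], by rw [mul_assoc, hue]⟩
    rcases hprim _ hfi hfc with h0 | h0
    · apply he0
      calc e = (u * b) * (u * b) := by rw [hub, he]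
        _ = u * (b * u) * b := by simp only [mul_assoc]
        _ = 0 := by rw [h0]; simp
    · exact hni ⟨u, h0, hub⟩
  intro x
  set b := e * x * e with hbdef
  have hb : InCorner e b :=
    ⟨by rw [hbdef, ← mul_assoc, ← mul_assoc, he], by rw [hbdef, mul_assoc, he]⟩
  by_cases hex : ∃ m ∈ spectrum ℂ b, m ≠ 0
  · obtain ⟨m, hm, hm0⟩ := hex
    refine ⟨m, ?_⟩
    rw [← sub_eq_zero]
    apply key
    · exact ⟨by rw [mul_sub, hb.1, mul_smul_comm, he], by rw [sub_mul, hb.2, smul_mul_assoc, he]⟩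
    · rintro ⟨y, hy1, hy2⟩
      set z := e * y * e with hz
      have hz1 : (b - m • e) * z = e := by
        calc (b - m • e) * z = ((b - m • e) * e) * y * e := by rw [hz]; simp only [mul_assoc]
          _ = e := by rw [sub_mul, hb.2, smul_mul_assoc, he, hy1, he]
      have hz2 : z * (b - m • e) = e := by
        calc z * (b - m • e) = e * (y * (e * (b - m • e))) := by rw [hz]; simp only [mul_assoc]
          _ = e := by rw [mul_sub, hb.1, mul_smul_comm, he, hy2, he]
      have hze : z * e = z := by rw [hz, mul_assoc, he]
      have hez : e * z = z := by rw [hz, ← mul_assoc, ← mul_assoc, he]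
      apply hm
      rw [sub_mul, smul_mul_assoc, hez] at hz1
      rw [mul_sub, mul_smul_comm, hze] at hz2
      refine ⟨⟨algebraMap ℂ A m - b, -z + m⁻¹ • (1 - e), ?_, ?_⟩, rfl⟩
      · have t : (algebraMap ℂ A m - b) * (-z + m⁻¹ • (1 - e)) =
            (b * z - m • z) + (m * m⁻¹) • (1 - e) - m⁻¹ • (b - b * e) := by
          rw [Algebra.algebraMap_eq_smul_one, sub_mul, mul_add, mul_add, smul_mul_assoc,
            smul_mul_assoc, one_mul, one_mul, mul_neg, smul_neg,
            mul_smul_comm, mul_sub, mul_one, mul_smul]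
          abel
        rw [t, hz1, hb.2, mul_inv_cancel₀ hm0]; simp
      · have t : (-z + m⁻¹ • (1 - e)) * (algebraMap ℂ A m - b) =
            (z * b - m • z) + (m * m⁻¹) • (1 - e) - m⁻¹ • (b - e * b) := by
          rw [Algebra.algebraMap_eq_smul_one, mul_sub, add_mul, add_mul, mul_smul_comm,
            mul_smul_comm, mul_one, mul_one, neg_mul, smul_neg,
            smul_mul_assoc, sub_mul, one_mul, mul_smul]
          abel
        rw [t, hz2, hb.1, mul_inv_cancel₀ hm0]; simp
  · refine ⟨0, ?_⟩
    rw [zero_smul]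
    apply key b hb
    rintro ⟨y, hy1, hy2⟩
    push Not at hex
    exact he0 (corner_zero he hb hy1 hy2 hex)


/-- The map `x ↦ e x f`. -/
def sandwich (e f : A) : A →ₗ[ℂ] A := LinearMap.mulRight ℂ f ∘ₗ LinearMap.mulLeft ℂ e

@[simp] lemma sandwich_apply (e f x : A) : sandwich e f x = e * x * f := rfl

lemma sandwich_min (hss : JacobsonSemisimple A) [NormOneClass A] {e f : A} (he' : e * e = e)
    (hf' : f * f = f) (he : MinIdem e) (hf : MinIdem f) :
    FiniteDimensional ℂ (LinearMap.range (sandwich e f)) := by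
  by_cases h0 : ∀ x, e * x * f = 0
  · have : sandwich e f = 0 := by ext x; simp [h0 x]
    rw [this, LinearMap.range_zero]; infer_instance
  push Not at h0
  obtain ⟨x, hx⟩ := h0
  set u := e * x * f with hu
  have heu : e * u = u := by rw [hu, ← mul_assoc, ← mul_assoc, he']
  have huf : u * f = u := by rw [hu, mul_assoc, hf']
  have hv : ∃ v, u * v * u ≠ 0 := by
    by_contra hcon
    push Not at hcon
    apply hx
    apply rad_zero hss
    intro a ha
    apply ha
    have hsq : (a * u) * (a * u) = 0 := by
      calc (a * u) * (a * u) = a * (u * a * u) := by simp only [mul_assoc]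
        _ = 0 := by rw [hcon, mul_zero]
    refine ⟨⟨algebraMap ℂ A 1 - a * u, 1 + a * u, ?_, ?_⟩, rfl⟩
    · rw [map_one, sub_mul, mul_add, mul_add, hsq]; simp
    · rw [map_one, mul_sub, add_mul, add_mul, hsq]; simp
  obtain ⟨v, hv⟩ := hv
  obtain ⟨c, hc⟩ := hf (v * u)
  have hc' : f * v * u = c • f := by
    rw [← hc]
    calc f * v * u = f * v * (u * f) := by rw [huf]
      _ = _ := by simp only [mul_assoc]
  have huvu : u * v * u = c • u := by
    calc u * v * u = (u * f) * v * u := by rw [huf]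
      _ = u * (f * v * u) := by simp only [mul_assoc]
      _ = c • u := by rw [hc', mul_smul_comm, huf]
  have hc0 : c ≠ 0 := by
    rintro rfl
    exact hv (by rw [huvu, zero_smul])
  have hle : LinearMap.range (sandwich e f) ≤ Submodule.span ℂ {u} := by
    rintro _ ⟨w, rfl⟩
    rw [Submodule.mem_span_singleton, sandwich_apply]
    obtain ⟨d, hd⟩ := he (w * f * v)
    refine ⟨c⁻¹ * d, ?_⟩
    have : c • (e * w * f) = d • u := by
      calc c • (e * w * f) = e * w * (c • f) := by rw [mul_smul_comm]
        _ = e * w * (f * v * (e * u)) := by rw [heu, hc']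
        _ = (e * (w * f * v) * e) * u := by simp only [mul_assoc]
        _ = d • u := by rw [hd, smul_mul_assoc, heu]
    rw [mul_smul, ← this, smul_smul, inv_mul_cancel₀ hc0, one_smul]
  exact Submodule.finiteDimensional_of_le hle

/-- Finite sums of minimal idempotents. -/
def good (A : Type*) [NormedRing A] [NormedAlgebra ℂ A] : AddSubmonoid A :=
  AddSubmonoid.closure {e : A | e * e = e ∧ MinIdem e}

lemma fd_add {f g : A →ₗ[ℂ] A} (hf : FiniteDimensional ℂ (LinearMap.range f))
    (hg : FiniteDimensional ℂ (LinearMap.range g)) :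
    FiniteDimensional ℂ (LinearMap.range (f + g)) :=
  Submodule.finiteDimensional_of_le (LinearMap.range_add_le f g)

lemma good_fd (hss : JacobsonSemisimple A) [NormOneClass A] {e f : A} (he : e ∈ good A)
    (hf : f ∈ good A) : FiniteDimensional ℂ (LinearMap.range (sandwich e f)) := by
  induction he using AddSubmonoid.closure_induction with
  | mem e he =>
    induction hf using AddSubmonoid.closure_induction with
    | mem f hf => exact sandwich_min hss he.1 hf.1 he.2 hf.2
    | zero =>
      have : sandwich e (0 : A) = 0 := by ext x; simp
      rw [this, LinearMap.range_zero]; infer_instance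
    | add f g _ _ h1 h2 =>
      have : sandwich e (f + g) = sandwich e f + sandwich e g := by ext x; simp [mul_add]
      rw [this]; exact fd_add h1 h2
  | zero =>
    have : sandwich (0 : A) f = 0 := by ext x; simp
    rw [this, LinearMap.range_zero]; infer_instance
  | add e g _ _ h1 h2 =>
    have : sandwich (e + g) f = sandwich e f + sandwich g f := by ext x; simp [add_mul]
    rw [this]; exact fd_add h1 h2

lemma spec_card [NormOneClass A] (V : Submodule ℂ A) [FiniteDimensional ℂ V] (b : A)
    (hb : ∀ n : ℕ, b ^ (n + 1) ∈ V) :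
    (spectrum ℂ b).encard ≤ (Module.finrank ℂ V + 1 : ℕ) := by
  set d := Module.finrank ℂ V with hd
  have hdep : ¬ LinearIndependent ℂ (fun i : Fin (d + 1) => (⟨b ^ ((i : ℕ) + 1), hb i⟩ : V)) := by
    intro h
    have := h.fintype_card_le_finrank
    simp at this
    omega
  rw [Fintype.not_linearIndependent_iff] at hdep
  obtain ⟨g, hg, i, hi⟩ := hdep
  set P : Polynomial ℂ := ∑ j : Fin (d + 1), Polynomial.monomial ((j : ℕ) + 1) (g j) with hP
  have hP0 : P ≠ 0 := by
    intro h
    have hco : P.coeff ((i : ℕ) + 1) = g i := by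
      rw [hP, Polynomial.finsetSum_coeff, Finset.sum_eq_single i]
      · simp
      · intro j _ hj
        rw [Polynomial.coeff_monomial, if_neg]
        intro h; apply hj; ext; omega
      · simp
    rw [h] at hco
    exact hi (by simpa using hco.symm)
  have hdeg : P.natDegree ≤ d + 1 := by
    refine Polynomial.natDegree_sum_le_of_forall_le _ _ fun j _ => ?_
    exact (Polynomial.natDegree_monomial_le _).trans (by have := j.2; omega)
  have haev : Polynomial.aeval b P = 0 := by
    have := congrArg (Subtype.val) hg
    rw [hP, map_sum]
    simpa [Polynomial.aeval_monomial, ← Algebra.smul_def] using this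
  have hsub : spectrum ℂ b ⊆ (P.roots.toFinset : Set ℂ) := by
    intro z hz
    have h1 := spectrum.subset_polynomial_aeval b P ⟨z, hz, rfl⟩
    have : Nontrivial A := NormOneClass.nontrivial
    rw [haev, spectrum.zero_eq] at h1
    simp only [Finset.mem_coe, Multiset.mem_toFinset]
    rw [Polynomial.mem_roots hP0]
    simpa using h1
  calc (spectrum ℂ b).encard ≤ (P.roots.toFinset : Set ℂ).encard := Set.encard_le_encard hsub
    _ = (P.roots.toFinset.card : ℕ) := Set.encard_coe_eq_coe_finsetCard _
    _ ≤ (d + 1 : ℕ) := by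
      exact_mod_cast (Multiset.toFinset_card_le _).trans ((Polynomial.card_roots' P).trans hdeg)

lemma mem_socle_of_good (hss : JacobsonSemisimple A) [NormOneClass A] {p : A} (hp : p * p = p)
    (hg : p ∈ good A) : p ∈ socle A := by
  have hfd := good_fd hss hg hg
  set V := LinearMap.range (sandwich p p)
  have hle : srank p ≤ (Module.finrank ℂ V + 1 : ℕ) := by
    refine iSup_le fun x => ?_
    have h1 : nzSpec (x * p) = nzSpec (p * (x * p)) := by
      unfold nzSpec
      rw [← spectrum.nonzero_mul_comm (x * p) p, mul_assoc, hp]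
    rw [h1]
    refine (Set.encard_le_encard (Set.sdiff_subset)).trans (spec_card V _ fun n => ?_)
    have h2 : p * (x * p) * p = p * (x * p) := by rw [mul_assoc, mul_assoc, hp]
    have h3 : p * (p * (x * p)) = p * (x * p) := by rw [← mul_assoc, hp]
    refine ⟨(p * (x * p)) ^ (n + 1), ?_⟩
    rw [sandwich_apply, pow_succ, mul_assoc, mul_assoc, h2, ← pow_succ, pow_succ', ← mul_assoc, h3]
  exact ne_top_of_le_ne_top (ENat.natCast_ne_top _) hle

/-- No infinite orthogonal sequence of idempotents. -/
lemma no_seq [NormOneClass A] {p : A} (hp : FinSpec p) (g : ℕ → A) (hg0 : ∀ n, g n ≠ 0)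
    (hgi : ∀ n, g n * g n = g n) (horth : ∀ m n, m ≠ n → g m * g n = 0)
    (hgp : ∀ n, InCorner p (g n)) : False := by
  set D : ℕ → ℝ := fun n => 1 + ∑ k ∈ Finset.range (n + 1), ‖g k‖ with hD
  have hDpos : ∀ n, 0 < D n := fun n => by positivity
  have hDmono : Monotone D := by
    refine monotone_nat_of_le_succ fun n => ?_
    simp only [hD]
    rw [Finset.sum_range_succ _ (n + 1)]
    linarith [norm_nonneg (g (n + 1))]
  have hDle : ∀ n, ‖g n‖ ≤ D n := fun n => by
    have : ‖g n‖ ≤ ∑ k ∈ Finset.range (n + 1), ‖g k‖ :=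
      Finset.single_le_sum (f := fun k => ‖g k‖) (fun k _ => norm_nonneg _) (by simp)
    simp only [hD]; linarith
  set c : ℕ → ℝ := fun n => (1 / 2) ^ n / D n with hc
  have hcpos : ∀ n, 0 < c n := fun n => div_pos (by positivity) (hDpos n)
  have hcanti : StrictAnti c := by
    refine strictAnti_nat_of_succ_lt fun n => ?_
    simp only [hc]
    have h1 := hDmono (Nat.le_succ n)
    have h2 := hDpos n
    refine div_lt_div₀ ?_ h1 (by positivity) h2
    rw [pow_succ]
    have : (0 : ℝ) < (1 / 2) ^ n := by positivity
    linarith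
  have hsum : Summable (fun n => ((c n : ℝ) : ℂ) • g n) := by
    refine Summable.of_norm_bounded (summable_geometric_two) fun n => ?_
    rw [norm_smul, Complex.norm_real, Real.norm_of_nonneg (hcpos n).le]
    simp only [hc]
    rw [div_mul_eq_mul_div, div_le_iff₀ (hDpos n)]
    exact mul_le_mul_of_nonneg_left (hDle n) (by positivity)
  set x : A := ∑' n, ((c n : ℝ) : ℂ) • g n with hx
  have hxp : InCorner p x := by
    constructor
    · rw [hx, ← hsum.tsum_mul_left]
      exact tsum_congr fun n => by rw [mul_smul_comm, (hgp n).1]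
    · rw [hx, ← hsum.tsum_mul_right]
      exact tsum_congr fun n => by rw [smul_mul_assoc, (hgp n).2]
  have hxg : ∀ m, x * g m = ((c m : ℝ) : ℂ) • g m := by
    intro m
    rw [hx, ← hsum.tsum_mul_right, tsum_eq_single m]
    · rw [smul_mul_assoc, hgi]
    · intro n hn
      rw [smul_mul_assoc, horth n m hn, smul_zero]
  have hmem : ∀ m, ((c m : ℝ) : ℂ) ∈ spectrum ℂ x := by
    rintro m ⟨u, hu⟩
    apply hg0 m
    have h1 : (u : A) * g m = 0 := by
      rw [hu, sub_mul, hxg, Algebra.algebraMap_eq_smul_one, smul_mul_assoc, one_mul, sub_self]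
    calc g m = (↑u⁻¹ : A) * ((u : A) * g m) := by rw [← mul_assoc]; simp
      _ = 0 := by rw [h1, mul_zero]
  refine Set.infinite_of_injective_forall_mem (f := fun m => ((c m : ℝ) : ℂ)) ?_ hmem (hp x hxp)
  exact Complex.ofReal_injective.comp hcanti.injective

lemma good_of (hss : JacobsonSemisimple A) [NormOneClass A] {p : A} (hpp : p * p = p)
    (hp : FinSpec p) : p ∈ good A := by
  by_contra hbad
  let B := {e : A // e * e = e ∧ InCorner p e ∧ e ∉ good A}
  have step : ∀ e : B, ∃ f : B, InCorner e.1 f.1 ∧ f.1 ≠ e.1 := by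
    rintro ⟨e, he, hep, heb⟩
    have hnp : ¬ Primitive e := fun h =>
      heb (AddSubmonoid.subset_closure ⟨he, minIdem_of_primitive hss hp he hep h⟩)
    unfold Primitive at hnp
    push Not at hnp
    obtain ⟨f, hf, hfe, hf0, hfne⟩ := hnp
    have hge : InCorner e (e - f) :=
      ⟨by rw [mul_sub, he, hfe.1], by rw [sub_mul, he, hfe.2]⟩
    have hgi : (e - f) * (e - f) = e - f := by
      rw [mul_sub, hge.2, sub_mul, hfe.1, hf, sub_self, sub_zero]
    by_cases hfg : f ∈ good A
    · refine ⟨⟨e - f, hgi, hep.trans hge, fun h => heb ?_⟩, hge, ?_⟩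
      · have := add_mem h hfg
        simpa using this
      · simpa using hf0
    · exact ⟨⟨f, hf, hep.trans hfe, hfg⟩, hfe, hfne⟩
  choose nx hnx hne using step
  let E : ℕ → B := fun n => nx^[n] ⟨p, hpp, ⟨hpp, hpp⟩, hbad⟩
  have hE : ∀ n, E (n + 1) = nx (E n) := fun n => Function.iterate_succ_apply' _ _ _
  have hle : ∀ m k, InCorner (E m).1 (E (m + k)).1 := by
    intro m k
    induction k with
    | zero => exact ⟨(E m).2.1, (E m).2.1⟩
    | succ k ih =>
      have : E (m + (k + 1)) = nx (E (m + k)) := hE (m + k)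
      rw [this]
      exact ih.trans (hnx _)
  have hlt : ∀ m n, m ≤ n → InCorner (E m).1 (E n).1 := by
    intro m n h
    obtain ⟨k, rfl⟩ := Nat.exists_eq_add_of_le h
    exact hle m k
  refine no_seq hp (fun n => (E n).1 - (E (n + 1)).1) ?_ ?_ ?_ ?_
  · intro n h
    rw [sub_eq_zero] at h
    apply hne (E n)
    rw [← hE]; exact h.symm
  · intro n
    have h := hlt n (n + 1) (Nat.le_succ n)
    simp only [mul_sub, sub_mul, h.1, h.2, (E n).2.1, (E (n + 1)).2.1]
    simp
  · intro m n hmn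
    rcases lt_or_gt_of_ne hmn with h | h
    · simp only [mul_sub, sub_mul, (hlt m n h.le).1, (hlt m (n + 1) (by omega)).1,
        (hlt (m + 1) n h).1, (hlt (m + 1) (n + 1) (by omega)).1]
      simp
    · simp only [mul_sub, sub_mul, (hlt n m h.le).2, (hlt n (m + 1) (by omega)).2,
        (hlt (n + 1) m h).2, (hlt (n + 1) (m + 1) (by omega)).2]
      simp
  · intro n
    have h1 := (E n).2.2.1
    have h2 := (E (n + 1)).2.2.1
    exact ⟨by rw [mul_sub, h1.1, h2.1], by rw [sub_mul, h1.2, h2.2]⟩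

end Helpers


theorem rieszProjection_mem_socle
    {A : Type*} [NormedRing A] [NormOneClass A] [NormedAlgebra ℂ A] [CompleteSpace A]
    (hss : JacobsonSemisimple A) (s : A)
    (hacc : ∀ x : A, ∀ z : ℂ, AccPt z (Filter.principal (spectrum ℂ (s * x))) → z = 0)
    (lam : ℂ) (hlam : lam ∈ spectrum ℂ s) (hlam0 : lam ≠ 0)
    (r : ℝ) (hr : 0 < r)
    (hsep : ∀ z ∈ spectrum ℂ s, ‖z - lam‖ ≤ r → z = lam) :
    ((2 * Real.pi * Complex.I : ℂ)⁻¹ •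
        circleIntegral (fun z => resolvent s z) lam r) ∈ socle A := by
  have hp := rproj_idem hr hsep
  obtain ⟨y, hy, -⟩ := rproj_factor hr hsep hlam0
  exact mem_socle_of_good hss hp (good_of hss hp (finSpec_of hp hy hacc))
end
end

section
/- Let A be a complex semisimple unital Banach algebra whose socle Soc A is a minimal two-sided ideal. Let a, b ∈ A be nonzero and suppose σ(bx) has at most 0 as an accumulation point for every x ∈ A. Then a = b if and only if σ'(ax) ⊆ σ'(bx) for all x ∈ A. -/
open Complex

noncomputable section

open Metric in
/-- Continuous linear maps commute with circle integrals. -/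
theorem rz_clm_circle {A : Type*} [NormedRing A] [NormedAlgebra ℂ A] [CompleteSpace A]
    (L : A →L[ℂ] A) (g : ℂ → A) (c : ℂ) (r : ℝ) (hg : CircleIntegrable g c r) :
    L (∮ z in C(c, r), g z) = ∮ z in C(c, r), L (g z) := by
  simp only [circleIntegral]
  rw [← ContinuousLinearMap.intervalIntegral_comp_comm L hg.out]
  simp

theorem rz_mul_circle {A : Type*} [NormedRing A] [NormedAlgebra ℂ A] [CompleteSpace A]
    (a : A) (g : ℂ → A) (c : ℂ) (r : ℝ) (hg : CircleIntegrable g c r) :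
    a * (∮ z in C(c, r), g z) = ∮ z in C(c, r), a * (g z) :=
  rz_clm_circle (ContinuousLinearMap.mul ℂ A a) g c r hg

theorem rz_circle_mul {A : Type*} [NormedRing A] [NormedAlgebra ℂ A] [CompleteSpace A]
    (a : A) (g : ℂ → A) (c : ℂ) (r : ℝ) (hg : CircleIntegrable g c r) :
    (∮ z in C(c, r), g z) * a = ∮ z in C(c, r), (g z) * a :=
  rz_clm_circle ((ContinuousLinearMap.mul ℂ A).flip a) g c r hg

theorem rz_res_mul {A : Type*} [Ring A] [Algebra ℂ A] (x : A) (z : ℂ)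
    (hz : z ∈ resolventSet ℂ x) :
    resolvent x z * (algebraMap ℂ A z - x) = 1 ∧ (algebraMap ℂ A z - x) * resolvent x z = 1 :=
  ⟨Ring.inverse_mul_cancel _ hz, Ring.mul_inverse_cancel _ hz⟩

/-- Scalar computation behind the Riesz idempotent. -/
theorem rz_key {A : Type*} [NormedRing A] [NormedAlgebra ℂ A] [CompleteSpace A]
    (x : A) (c : ℂ) (r : ℝ) (hr : 0 < r)
    (h : ∀ z ∈ Metric.sphere c r, z ∈ resolventSet ℂ x) (μ : ℂ) (k : A)
    (hμ : μ ∉ Metric.sphere c r)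
    (hk : (∮ z in C(c, r), (z - μ)⁻¹ • (1 : A)) = k) :
    (algebraMap ℂ A μ - x) * (∮ z in C(c, r), (z - μ)⁻¹ • resolvent x z)
      = k - (∮ z in C(c, r), resolvent x z) ∧
    (∮ z in C(c, r), (z - μ)⁻¹ • resolvent x z) * (algebraMap ℂ A μ - x)
      = k - (∮ z in C(c, r), resolvent x z) := by
  have hRc : ContinuousOn (fun z => resolvent x z) (Metric.sphere c r) := fun z hz =>
    (spectrum.hasDerivAt_resolvent_const_left (h z hz)).continuousAt.continuousWithinAt
  have hsc : ContinuousOn (fun z : ℂ => (z - μ)⁻¹) (Metric.sphere c r) := by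
    apply ContinuousOn.inv₀ (by fun_prop)
    intro z hz h0
    rw [sub_eq_zero] at h0
    exact hμ (h0 ▸ hz)
  have hi1 : CircleIntegrable (fun z => resolvent x z) c r := hRc.circleIntegrable hr.le
  have hi2 : CircleIntegrable (fun z => (z - μ)⁻¹ • resolvent x z) c r :=
    (hsc.smul hRc).circleIntegrable hr.le
  have hi3 : CircleIntegrable (fun z => (z - μ)⁻¹ • (1 : A)) c r :=
    (hsc.smul continuousOn_const).circleIntegrable hr.le
  rw [rz_mul_circle _ _ _ _ hi2, rz_circle_mul _ _ _ _ hi2, ← hk,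
    ← circleIntegral.integral_sub hi3 hi1]
  constructor
  · apply circleIntegral.integral_congr hr.le
    intro z hz
    have h0 : z - μ ≠ 0 := by
      intro h0
      rw [sub_eq_zero] at h0
      exact hμ (h0 ▸ hz)
    have e : algebraMap ℂ A μ - x = (algebraMap ℂ A z - x) - (z - μ) • (1 : A) := by
      rw [sub_smul, Algebra.algebraMap_eq_smul_one, Algebra.algebraMap_eq_smul_one]; abel
    simp only
    rw [e, mul_smul_comm, sub_mul, (rz_res_mul x z (h z hz)).2, smul_sub, smul_mul_assoc,
      smul_smul, inv_mul_cancel₀ h0, one_mul, one_smul]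
  · apply circleIntegral.integral_congr hr.le
    intro z hz
    have h0 : z - μ ≠ 0 := by
      intro h0
      rw [sub_eq_zero] at h0
      exact hμ (h0 ▸ hz)
    have e : algebraMap ℂ A μ - x = (algebraMap ℂ A z - x) - (z - μ) • (1 : A) := by
      rw [sub_smul, Algebra.algebraMap_eq_smul_one, Algebra.algebraMap_eq_smul_one]; abel
    simp only
    rw [e, smul_mul_assoc, mul_sub, (rz_res_mul x z (h z hz)).1, smul_sub, mul_smul_comm,
      smul_smul, inv_mul_cancel₀ h0, mul_one, one_smul]

/-- The (unnormalised) Riesz integral squares to `2πi` times itself. -/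
theorem rz_idem {A : Type*} [NormedRing A] [NormedAlgebra ℂ A] [CompleteSpace A]
    (x : A) (c : ℂ) (r s : ℝ) (hr : 0 < r) (hrs : r < s)
    (h : ∀ z, z ≠ c → z ∈ Metric.closedBall c s → z ∈ resolventSet ℂ x)
    (P : A) (h1 : (∮ z in C(c, r), resolvent x z) = P)
    (h2 : (∮ z in C(c, s), resolvent x z) = P) :
    P * P = (2 * Real.pi * I : ℂ) • P := by
  have hs : 0 < s := hr.trans hrs
  have hRes : ∀ q, 0 < q → q ≤ s → ∀ z ∈ Metric.sphere c q, z ∈ resolventSet ℂ x := by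
    intro q hq hqs z hz
    apply h
    · rintro rfl
      simp at hz
      exact hq.ne hz
    · exact Metric.closedBall_subset_closedBall hqs (Metric.sphere_subset_closedBall hz)
  have hRc : ∀ q, 0 < q → q ≤ s → CircleIntegrable (fun z => resolvent x z) c q := by
    intro q hq hqs
    refine ContinuousOn.circleIntegrable hq.le fun z hz => ?_
    exact (spectrum.hasDerivAt_resolvent_const_left (hRes q hq hqs z hz)).continuousAt.continuousWithinAt
  set G : ℂ → A := fun w => ∮ z in C(c, s), (z - w)⁻¹ • resolvent x z with hG
  have hGd : DifferentiableOn ℂ G (Metric.ball c s) := by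
    lift s to NNReal using hs.le
    have := (hasFPowerSeriesOn_cauchy_integral (hRc s hs le_rfl) (by exact_mod_cast hs)).differentiableOn
    have h3 : G = fun w => (2 * Real.pi * I : ℂ) • ((2 * Real.pi * I : ℂ)⁻¹ • G w) := by
      funext w
      rw [smul_smul, mul_inv_cancel₀ (by simp [Real.pi_ne_zero]), one_smul]
    rw [h3]
    rw [Metric.eball_coe] at this
    exact this.fun_const_smul (2 * Real.pi * I : ℂ)
  have hG0 : (∮ w in C(c, r), G w) = 0 := by
    apply DiffContOnCl.circleIntegral_eq_zero hr.le
    apply DifferentiableOn.diffContOnCl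
    apply hGd.mono
    rw [closure_ball _ hr.ne']
    exact Metric.closedBall_subset_ball hrs
  have hGc : CircleIntegrable G c r := by
    refine ContinuousOn.circleIntegrable hr.le (hGd.continuousOn.mono ?_)
    exact Metric.sphere_subset_closedBall.trans (Metric.closedBall_subset_ball hrs)
  have hpt : ∀ w ∈ Metric.sphere c r, resolvent x w * P = (2 * Real.pi * I : ℂ) • resolvent x w - G w := by
    intro w hw
    have hwb : w ∈ Metric.ball c s :=
      Metric.closedBall_subset_ball hrs (Metric.sphere_subset_closedBall hw)
    have hws : w ∉ Metric.sphere c s := by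
      intro hh
      rw [Metric.mem_sphere] at hh
      rw [Metric.mem_ball] at hwb
      linarith
    have k := (rz_key x c s hs (hRes s hs le_rfl) w _ hws rfl).1
    rw [circleIntegral.integral_smul_const, circleIntegral.integral_sub_inv_of_mem_ball hwb, h2] at k
    have k2 := congrArg (fun t => resolvent x w * t) k
    simp only [← mul_assoc, (rz_res_mul x w (hRes r hr hrs.le w hw)).1, one_mul, mul_sub] at k2
    rw [mul_smul_comm, mul_one] at k2
    rw [hG]; simp only
    rw [k2]; abel
  have hRs : CircleIntegrable (fun z => (2 * Real.pi * I : ℂ) • resolvent x z) c r := by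
    refine ContinuousOn.circleIntegrable hr.le fun z hz => ?_
    exact ((spectrum.hasDerivAt_resolvent_const_left
      (hRes r hr hrs.le z hz)).continuousAt.continuousWithinAt).const_smul _
  calc P * P = (∮ w in C(c, r), resolvent x w) * P := by rw [h1]
    _ = ∮ w in C(c, r), resolvent x w * P := rz_circle_mul _ _ _ _ (hRc r hr hrs.le)
    _ = ∮ w in C(c, r), ((2 * Real.pi * I : ℂ) • resolvent x w - G w) :=
        circleIntegral.integral_congr hr.le hpt
    _ = (2 * Real.pi * I : ℂ) • P := by
        rw [circleIntegral.integral_sub hRs hGc, hG0, sub_zero,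
          circleIntegral.integral_smul, h1]

theorem rz_unit {A : Type*} [Ring A] [Algebra ℂ A] (y g S : A) (t : ℂ) (ht : t ≠ 0)
    (hg : g * g = g) (h1 : y * S = g) (h2 : S * y = g) :
    IsUnit (y * g + t • (1 - g)) := by
  have hc : y * g = g * y := by rw [← h1, mul_assoc y S y, h2, h1]
  have e1 : (1 - g) * g = 0 := by rw [sub_mul, one_mul, hg, sub_self]
  have e2 : g * (1 - g) = 0 := by rw [mul_sub, mul_one, hg, sub_self]
  have e3 : (1 - g) * (1 - g) = 1 - g := by rw [mul_sub, e1, mul_one, sub_zero]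
  refine isUnit_iff_exists.2 ⟨g * S * g + t⁻¹ • (1 - g), ?_, ?_⟩
  · have a1 : y * g * (g * S * g) = g := by
      calc y * g * (g * S * g) = y * (g * g) * S * g := by simp only [mul_assoc]
        _ = g * (y * S) * g := by rw [hg, hc]; simp only [mul_assoc]
        _ = g := by rw [h1, hg, hg]
    have a2 : y * g * (1 - g) = 0 := by rw [mul_assoc, e2, mul_zero]
    have a3 : (1 - g) * (g * S * g) = 0 := by rw [← mul_assoc, ← mul_assoc, e1, zero_mul, zero_mul]
    simp only [add_mul, mul_add, smul_mul_assoc, mul_smul_comm, a1, a2, a3, e3, smul_zero, zero_add]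
    rw [smul_smul]
    first | rw [mul_inv_cancel₀ ht] | rw [inv_mul_cancel₀ ht]
    rw [one_smul]
    abel
  · have a1 : (g * S * g) * (y * g) = g := by
      calc (g * S * g) * (y * g) = g * S * (g * y) * g := by simp only [mul_assoc]
        _ = g * (S * y) * (g * g) := by rw [← hc]; simp only [mul_assoc]
        _ = g := by rw [h2, hg, hg]
    have a2 : (1 - g) * (y * g) = 0 := by rw [hc, ← mul_assoc, e1, zero_mul]
    have a3 : (g * S * g) * (1 - g) = 0 := by rw [mul_assoc, e2, mul_zero]
    simp only [add_mul, mul_add, smul_mul_assoc, mul_smul_comm, a1, a2, a3, e3, smul_zero, zero_add]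
    rw [smul_smul]
    first | rw [mul_inv_cancel₀ ht] | rw [inv_mul_cancel₀ ht]
    rw [one_smul]
    abel

open Filter Topology in
/-- Riesz idempotent at a nonzero isolated point of the spectrum. -/
theorem rz_main {A : Type*} [NormedRing A] [NormedAlgebra ℂ A] [CompleteSpace A]
    (x : A) (c : ℂ) (hc : c ≠ 0) (hiso : ∀ᶠ z in 𝓝[≠] c, z ∉ spectrum ℂ x) :
    ∃ f : A, f * f = f ∧ (∃ T, x * T = f ∧ T * x = f) ∧
      IsUnit (algebraMap ℂ A c - x * (1 - f)) ∧
      ∀ μ : ℂ, μ ≠ 0 → IsUnit (algebraMap ℂ A μ - (x * f - c • f)) := by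
  obtain ⟨ρ, hρ, hball⟩ := Metric.mem_nhdsWithin_iff.1 hiso
  set s := min ρ ‖c‖ / 2 with hs_def
  have hm : 0 < min ρ ‖c‖ := lt_min hρ (norm_pos_iff.2 hc)
  have hs : 0 < s := by positivity
  have hsρ : s < ρ := by have := min_le_left ρ ‖c‖; linarith
  have hsc : s < ‖c‖ := by have := min_le_right ρ ‖c‖; linarith
  have h : ∀ z, z ≠ c → z ∈ Metric.closedBall c s → z ∈ resolventSet ℂ x := by
    intro z hz hzs
    have : z ∉ spectrum ℂ x := hball ⟨Metric.closedBall_subset_ball hsρ hzs, hz⟩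
    exact not_not.1 this
  have hJ : ∀ q, 0 < q → q ≤ s →
      (∮ z in C(c, s), resolvent x z) = ∮ z in C(c, q), resolvent x z := by
    intro q hq hqs
    have hd : ∀ z ∈ Metric.closedBall c s \ Metric.ball c q,
        DifferentiableAt ℂ (fun z => resolvent x z) z := by
      rintro z ⟨hz1, hz2⟩
      refine (spectrum.hasDerivAt_resolvent_const_left (h z ?_ hz1)).differentiableAt
      rintro rfl
      exact hz2 (Metric.mem_ball_self hq)
    refine circleIntegral_eq_of_differentiable_on_annulus_off_countable hq hqs
      Set.countable_empty (fun z hz => (hd z hz).continuousAt.continuousWithinAt) ?_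
    rintro z ⟨⟨hz1, hz2⟩, -⟩
    exact hd z ⟨Metric.ball_subset_closedBall hz1, fun hh => hz2 (Metric.ball_subset_closedBall hh)⟩
  set P := ∮ z in C(c, s), resolvent x z with hP
  set k : ℂ := 2 * Real.pi * I with hk
  have hk0 : k ≠ 0 := by simp [hk, Real.pi_ne_zero]
  have hPP : P * P = k • P :=
    rz_idem x c (s / 2) s (by positivity) (by linarith) h P (hJ _ (by positivity) (by linarith)).symm rfl
  have hff : (k⁻¹ • P) * (k⁻¹ • P) = k⁻¹ • P := by
    rw [smul_mul_smul_comm, hPP, smul_smul, mul_assoc, inv_mul_cancel₀ hk0, mul_one]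
  have hRes : ∀ q, 0 < q → q ≤ s → ∀ z ∈ Metric.sphere c q, z ∈ resolventSet ℂ x := by
    intro q hq hqs z hz
    apply h
    · rintro rfl
      simp at hz
      exact hq.ne hz
    · exact Metric.closedBall_subset_closedBall hqs (Metric.sphere_subset_closedBall hz)
  -- partial inverse on the range of `f`
  have hout : ∀ μ, μ ≠ c → ∃ T, (algebraMap ℂ A μ - x) * T = k⁻¹ • P ∧
      T * (algebraMap ℂ A μ - x) = k⁻¹ • P := by
    intro μ hμ
    have hd : 0 < dist μ c := dist_pos.2 hμ
    set q := min s (dist μ c / 2) with hq_def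
    have hq : 0 < q := lt_min hs (by positivity)
    have hqs : q ≤ s := min_le_left _ _
    have hqd : q < dist μ c := by have := min_le_right s (dist μ c / 2); linarith
    have hμs : μ ∉ Metric.sphere c q := by
      intro hh
      rw [Metric.mem_sphere] at hh
      linarith
    have hzero : (∮ z in C(c, q), (z - μ)⁻¹ • (1 : A)) = 0 := by
      apply DiffContOnCl.circleIntegral_eq_zero hq.le
      apply DifferentiableOn.diffContOnCl
      rw [closure_ball _ hq.ne']
      intro z hz
      have : z - μ ≠ 0 := by
        intro h0
        rw [sub_eq_zero] at h0
        subst h0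
        rw [Metric.mem_closedBall] at hz
        linarith
      apply DifferentiableAt.differentiableWithinAt
      fun_prop (disch := assumption)
    obtain ⟨k1, k2⟩ := rz_key x c q hq (hRes q hq hqs) μ 0 hμs hzero
    rw [← hJ q hq hqs, zero_sub] at k1 k2
    refine ⟨-(k⁻¹ • ∮ z in C(c, q), (z - μ)⁻¹ • resolvent x z), ?_, ?_⟩
    · rw [mul_neg, mul_smul_comm, k1, smul_neg, neg_neg]
    · rw [neg_mul, smul_mul_assoc, k2, smul_neg, neg_neg]
  have hin : ∃ S, (algebraMap ℂ A c - x) * S = 1 - k⁻¹ • P ∧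
      S * (algebraMap ℂ A c - x) = 1 - k⁻¹ • P := by
    have hcs : c ∉ Metric.sphere c s := by simp [hs.ne]
    have hone : (∮ z in C(c, s), (z - c)⁻¹ • (1 : A)) = k • 1 := by
      rw [circleIntegral.integral_smul_const,
        circleIntegral.integral_sub_inv_of_mem_ball (Metric.mem_ball_self hs)]
    obtain ⟨k1, k2⟩ := rz_key x c s hs (hRes s hs le_rfl) c _ hcs hone
    refine ⟨k⁻¹ • ∮ z in C(c, s), (z - c)⁻¹ • resolvent x z, ?_, ?_⟩
    · rw [mul_smul_comm, k1, smul_sub, smul_smul, inv_mul_cancel₀ hk0, one_smul]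
    · rw [smul_mul_assoc, k2, smul_sub, smul_smul, inv_mul_cancel₀ hk0, one_smul]
  generalize k⁻¹ • P = f at hff hout hin
  refine ⟨f, hff, ?_, ?_, ?_⟩
  · obtain ⟨T, h1, h2⟩ := hout 0 hc.symm
    refine ⟨-T, ?_, ?_⟩
    · simpa using h1
    · simpa using h2
  · obtain ⟨S, h1, h2⟩ := hin
    have hg : (1 - f) * (1 - f) = 1 - f := by
      rw [mul_sub, sub_mul 1 f f, hff]; simp
    convert rz_unit _ _ S c hc hg h1 h2 using 1
    rw [Algebra.algebraMap_eq_smul_one]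
    simp only [mul_sub, sub_mul, smul_sub, mul_one, one_mul, sub_sub_cancel, smul_mul_assoc]
    abel
  · intro μ hμ
    obtain ⟨S, h1, h2⟩ := hout (μ + c) (by simpa using hμ)
    convert rz_unit _ _ S μ hμ hff h1 h2 using 1
    rw [Algebra.algebraMap_eq_smul_one, Algebra.algebraMap_eq_smul_one]
    simp only [add_smul, sub_mul, add_mul, smul_sub, smul_mul_assoc, one_mul]
    abel


theorem sp_ss {A : Type*} [NormedRing A] [NormedAlgebra ℂ A]
    (hss : JacobsonSemisimple A) (d : A) (h : ∀ y, nzSpec (d * y) = ∅) : d = 0 := by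
  have : d ∈ TwoSidedIdeal.jacobson (⊥ : TwoSidedIdeal A) := by
    rw [TwoSidedIdeal.mem_jacobson_iff]
    intro y
    have h1 : (-1 : ℂ) ∉ spectrum ℂ (y * d) := by
      intro hh
      have h2 : (-1 : ℂ) ∈ nzSpec (y * d) := ⟨hh, by simp⟩
      rw [nzSpec, spectrum.nonzero_mul_comm] at h2
      have h3 := h y
      rw [nzSpec] at h3
      rw [h3] at h2
      exact h2
    rw [spectrum.notMem_iff] at h1
    obtain ⟨u, hu⟩ := h1
    refine ⟨-(↑u⁻¹ : A), ?_⟩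
    rw [TwoSidedIdeal.mem_bot]
    have h2 : (↑u⁻¹ : A) * (algebraMap ℂ A (-1) - y * d) = 1 := by rw [← hu]; simp
    have h3 : algebraMap ℂ A (-1) = -1 := by simp
    rw [h3, mul_sub, ← mul_assoc, mul_neg, mul_one] at h2
    rw [neg_mul, neg_mul, ← sub_eq_zero.2 h2]
    abel
  rw [hss] at this
  exact (TwoSidedIdeal.mem_bot _).1 this

theorem sp_ss2 {A : Type*} [NormedRing A] [NormedAlgebra ℂ A]
    (hss : JacobsonSemisimple A) (z : A) (h : ∀ y, z * y * z = 0) : z = 0 := by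
  apply sp_ss hss
  intro y
  rw [Set.eq_empty_iff_forall_notMem]
  rintro μ ⟨h1, h2⟩
  have h2 : μ ≠ 0 := h2
  apply h1
  have hn : (z * y) * (z * y) = 0 := by rw [← mul_assoc, h, zero_mul]
  have : IsUnit (algebraMap ℂ A μ - z * y) := by
    have e1 : μ * (μ⁻¹ * μ⁻¹) = μ⁻¹ := by field_simp
    refine isUnit_iff_exists.2 ⟨μ⁻¹ • 1 + (μ⁻¹ * μ⁻¹) • (z * y), ?_, ?_⟩
    · rw [Algebra.algebraMap_eq_smul_one, sub_mul, mul_add, mul_add, smul_mul_smul_comm,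
        smul_mul_smul_comm, mul_inv_cancel₀ h2, e1, mul_smul_comm, mul_smul_comm, hn, smul_zero,
        one_mul, mul_one, one_mul, one_smul]
      abel
    · rw [Algebra.algebraMap_eq_smul_one, mul_sub, add_mul, add_mul, smul_mul_smul_comm,
        smul_mul_smul_comm, inv_mul_cancel₀ h2, mul_comm (μ⁻¹ * μ⁻¹) μ, e1, smul_mul_assoc,
        smul_mul_assoc, hn, smul_zero, one_mul, mul_one, one_mul, one_smul]
      abel
  exact this

open Filter Topology in
theorem sp_quasi {A : Type*} [NormedRing A] [NormedAlgebra ℂ A] [CompleteSpace A]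
    (q z e : A) (hq : nzSpec q = ∅) (h1 : q * z = e) (h2 : z * q = e) (he : e * e = e) : e = 0 := by
  have hr : spectralRadius ℂ q = 0 := by
    rw [spectralRadius]
    simp only [ENNReal.iSup_eq_zero]
    intro k hk
    by_contra h0
    have : k ∈ nzSpec q := ⟨hk, by simpa using h0⟩
    rw [hq] at this
    exact this
  have ht := spectrum.pow_nnnorm_pow_one_div_tendsto_nhds_spectralRadius q
  rw [hr] at ht
  set ε : NNReal := (2 * (‖z‖₊ + 1))⁻¹ with hε
  have hε0 : (0 : ENNReal) < ε := by
    rw [ENNReal.coe_pos]; positivity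
  have hev := ht.eventually (gt_mem_nhds hε0)
  have hle : ∀ᶠ n : ℕ in atTop, ‖e‖ ≤ (1 / 2 : ℝ) ^ n := by
    filter_upwards [hev, eventually_gt_atTop 0] with n hn hn0
    have h3 : ‖q ^ n‖₊ < ε ^ n := by
      have h4 := ENNReal.rpow_lt_rpow hn (show (0 : ℝ) < n by exact_mod_cast hn0)
      rw [← ENNReal.rpow_mul, one_div, inv_mul_cancel₀ (by exact_mod_cast hn0.ne'),
        ENNReal.rpow_one, ENNReal.rpow_natCast] at h4
      exact_mod_cast h4
    have h5 : q ^ n * z ^ n = e := by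
      have hc : Commute q z := by rw [Commute, SemiconjBy, h1, h2]
      rw [← hc.mul_pow, h1]
      exact IsIdempotentElem.pow_eq he hn0.ne'
    have h6 : ‖q ^ n‖ ≤ (ε : ℝ) ^ n := by exact_mod_cast h3.le
    calc ‖e‖ = ‖q ^ n * z ^ n‖ := by rw [h5]
      _ ≤ ‖q ^ n‖ * ‖z ^ n‖ := norm_mul_le _ _
      _ ≤ (ε : ℝ) ^ n * ‖z‖ ^ n := by
          gcongr
          exact norm_pow_le' z hn0
      _ = (ε * ‖z‖ : ℝ) ^ n := by rw [mul_pow]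
      _ ≤ (1 / 2 : ℝ) ^ n := by
          gcongr
          rw [hε]
          push_cast
          rw [inv_mul_le_iff₀ (by positivity)]
          linarith [norm_nonneg z]
  have hz : Tendsto (fun n : ℕ => (1 / 2 : ℝ) ^ n) atTop (𝓝 0) :=
    tendsto_pow_atTop_nhds_zero_of_lt_one (by norm_num) (by norm_num)
  have := ge_of_tendsto hz hle
  exact norm_le_zero_iff.1 this

theorem sp_smul_subset {A : Type*} [Ring A] [Algebra ℂ A] (e : A) (he : e * e = e) (s : ℂ) :
    nzSpec (s • e) ⊆ {s} := by
  rintro μ ⟨h1, h2⟩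
  have h2 : μ ≠ 0 := h2
  by_contra h3
  have h3 : μ ≠ s := h3
  apply h1
  have h4 : μ - s ≠ 0 := sub_ne_zero.2 h3
  have := rz_unit ((μ - s) • (1 : A)) e ((μ - s)⁻¹ • e) μ h2 he
    (by rw [smul_mul_smul_comm, mul_inv_cancel₀ h4, one_smul, one_mul])
    (by rw [smul_mul_smul_comm, inv_mul_cancel₀ h4, one_smul, mul_one])
  have h5 : IsUnit (algebraMap ℂ A μ - s • e) := by
    convert this using 1
    rw [Algebra.algebraMap_eq_smul_one, smul_mul_assoc, one_mul, sub_smul, smul_sub]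
    abel
  exact h5

theorem sp_smul_mem {A : Type*} [Ring A] [Algebra ℂ A] (e : A) (he : e * e = e) (he0 : e ≠ 0)
    (s : ℂ) (hs : s ≠ 0) : s ∈ nzSpec (s • e) := by
  refine ⟨?_, hs⟩
  rw [spectrum.mem_iff]
  intro hu
  apply he0
  have : (algebraMap ℂ A s - s • e) * e = 0 := by
    rw [Algebra.algebraMap_eq_smul_one, sub_mul, smul_mul_assoc, smul_mul_assoc, he, one_mul,
      sub_self]
  exact (hu.mul_right_eq_zero).1 this

theorem sp_socle {A : Type*} [Ring A] [Algebra ℂ A] (e : A) (he : e * e = e)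
    (h : ∀ w, ∃ s : ℂ, e * w * e = s • e) : e ∈ socle A := by
  have : srank e ≤ 1 := by
    refine iSup_le fun x => ?_
    obtain ⟨s, hs⟩ := h x
    have h1 : nzSpec (x * e) = nzSpec (s • e) := by
      rw [← hs, mul_assoc e x e]
      conv_rhs => rw [nzSpec, spectrum.nonzero_mul_comm, mul_assoc, he]
      rfl
    rw [h1]
    exact (Set.encard_le_encard (sp_smul_subset e he s)).trans (by simp)
  intro h0
  rw [h0] at this
  simp at this

open Filter Topology in
theorem sp_corner {A : Type*} [NormedRing A] [NormedAlgebra ℂ A] [CompleteSpace A]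
    (hss : JacobsonSemisimple A) (d v e : A)
    (H : ∀ y, ∀ z : ℂ, z ≠ 0 → ∀ᶠ w in 𝓝[≠] z, w ∉ spectrum ℂ (d * y))
    (hev : d * v = e) (he : e * e = e) (he0 : e ≠ 0)
    (hmin : ∀ f, f * f = f → e * f = f → f * e = f → f = 0 ∨ f = e) (w : A) :
    ∃ s : ℂ, e * w * e = s • e := by
  have step1 : ∀ x, e * x = x → x * e = x → ∃ s : ℂ, nzSpec (x - s • e) = ∅ := by
    intro x hx1 hx2
    rcases Set.eq_empty_or_nonempty (nzSpec x) with h | ⟨c, hc1, hc2⟩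
    · exact ⟨0, by simpa using h⟩
    have hc2 : c ≠ 0 := hc2
    obtain ⟨f, hf, ⟨T, hT1, hT2⟩, hu, hq⟩ := rz_main x c hc2 (by
      have := H (v * x) c hc2
      rwa [← mul_assoc, hev, hx1] at this)
    have hf1 : e * f = f := by rw [← hT1, ← mul_assoc, hx1]
    have hf2 : f * e = f := by rw [← hT2, mul_assoc, hx2]
    rcases hmin f hf hf1 hf2 with rfl | rfl
    · rw [sub_zero, mul_one] at hu
      exact absurd hu hc1
    · refine ⟨c, ?_⟩
      rw [Set.eq_empty_iff_forall_notMem]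
      rintro μ ⟨h1, h2⟩
      have := hq μ h2
      rw [hx2] at this
      exact h1 this
  have step2 : ∀ q, e * q = q → q * e = q → nzSpec q = ∅ → q = 0 := by
    intro q hq1 hq2 hq
    apply sp_ss hss
    intro y
    have hx1 : e * (q * y * e) = q * y * e := by rw [← mul_assoc, ← mul_assoc, hq1]
    have hx2 : (q * y * e) * e = q * y * e := by rw [mul_assoc, he]
    have hxe : nzSpec (q * y) = nzSpec (q * y * e) := by
      conv_lhs => rw [← hq1, mul_assoc, nzSpec, spectrum.nonzero_mul_comm]
      rfl
    obtain ⟨s, hs⟩ := step1 _ hx1 hx2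
    rw [hxe]
    rcases eq_or_ne s 0 with rfl | hs0
    · simpa using hs
    exfalso
    set x := q * y * e with hx
    have hu : IsUnit (algebraMap ℂ A (-s) - (x - s • e)) := by
      have : -s ∉ nzSpec (x - s • e) := by rw [hs]; simp
      by_contra hc
      exact this ⟨hc, by simpa using hs0⟩
    obtain ⟨V, hV, -⟩ := isUnit_iff_exists.1 hu
    have hxV : q * (y * e * -V) = e := by
      have h1 : e * (algebraMap ℂ A (-s) - (x - s • e)) = -x := by
        rw [Algebra.algebraMap_eq_smul_one]
        rw [mul_sub, mul_sub, mul_smul_comm, mul_smul_comm, he, mul_one, hx1, neg_smul]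
        abel
      have h2 : -x * V = e := by rw [← h1, mul_assoc, hV, mul_one]
      calc q * (y * e * -V) = -x * V := by rw [hx]; simp only [mul_assoc, neg_mul, mul_neg]
        _ = e := h2
    set z := y * e * -V with hz
    have h1 : q * (e * z * e) = e := by
      rw [← mul_assoc, ← mul_assoc, hq2, hxV, he]
    have h2 : (e * z * e) * q = e := by
      have hid : (e * z * e * q) * (e * z * e * q) = e * z * e * q := by
        calc (e * z * e * q) * (e * z * e * q) = e * z * e * (q * (e * z * e)) * q := by
              simp only [mul_assoc]
          _ = e * z * e * q := by rw [h1, mul_assoc (e * z), he]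
      rcases hmin _ hid (by simp only [← mul_assoc, he]) (by rw [mul_assoc, hq2]) with h0 | h0
      · exfalso
        apply he0
        have : q = 0 := by
          calc q = q * (e * z * e) * q := by rw [h1, hq1]
            _ = 0 := by rw [mul_assoc, h0, mul_zero]
        rw [← h1, this, zero_mul]
      · exact h0
    exact he0 (sp_quasi q _ e hq h1 h2 he)
  obtain ⟨s, hs⟩ := step1 (e * w * e) (by simp only [← mul_assoc, he]) (by rw [mul_assoc, he])
  refine ⟨s, sub_eq_zero.1 (step2 _ ?_ ?_ hs)⟩
  · simp only [mul_sub, ← mul_assoc, he, mul_smul_comm]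
  · simp only [sub_mul, mul_assoc, he, smul_mul_assoc]

open Filter Topology in
theorem sp_exists {A : Type*} [NormedRing A] [NormedAlgebra ℂ A] [CompleteSpace A]
    (hss : JacobsonSemisimple A) (d : A) (hd : d ≠ 0)
    (H : ∀ y, ∀ z : ℂ, z ≠ 0 → ∀ᶠ w in 𝓝[≠] z, w ∉ spectrum ℂ (d * y)) :
    ∃ e v, d * v = e ∧ e * e = e ∧ e ≠ 0 ∧ ∀ w, ∃ s : ℂ, e * w * e = s • e := by
  have hp : ∃ p, p * p = p ∧ p ≠ 0 ∧ ∃ v, d * v = p := by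
    by_contra hcon
    apply hd
    apply sp_ss hss
    intro y
    by_contra hne
    obtain ⟨c, hc1, hc2⟩ := Set.nonempty_iff_ne_empty.2 hne
    have hc2 : c ≠ 0 := hc2
    obtain ⟨f, hf, ⟨T, hT1, hT2⟩, hu, -⟩ := rz_main (d * y) c hc2 (H y c hc2)
    refine hcon ⟨f, hf, ?_, y * T, by rw [← mul_assoc, hT1]⟩
    rintro rfl
    rw [sub_zero, mul_one] at hu
    exact hc1 hu
  obtain ⟨p, hpp, hp0, v, hv⟩ := hp
  by_contra hcon
  let S := {f : A // f * f = f ∧ f ≠ 0 ∧ ∃ v, d * v = f}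
  have hstep : ∀ e : S, ∃ f : S, (e : A) * f = f ∧ (f : A) * e = f ∧ f ≠ e := by
    rintro ⟨e, he, he0, v, hv⟩
    by_contra hno
    refine hcon ⟨e, v, hv, he, he0, fun w => sp_corner hss d v e H hv he he0 ?_ w⟩
    intro f hf h1 h2
    by_contra hff
    push Not at hff
    exact hno ⟨⟨f, hf, hff.1, v * f, by rw [← mul_assoc, hv, h1]⟩, h1, h2,
      fun h => hff.2 (congrArg Subtype.val h)⟩
  choose st hs1 hs2 hs3 using hstep
  let P : ℕ → S := fun n => Nat.rec ⟨p, hpp, hp0, v, hv⟩ (fun _ s => st s) n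
  have hP : ∀ n, P (n + 1) = st (P n) := fun n => rfl
  have hle : ∀ m k, (P m).1 * (P (m + k)).1 = (P (m + k)).1 ∧
      (P (m + k)).1 * (P m).1 = (P (m + k)).1 := by
    intro m k
    induction k with
    | zero => exact ⟨(P m).2.1, (P m).2.1⟩
    | succ k ih =>
      rw [← add_assoc, hP]
      constructor
      · rw [← hs1 (P (m + k)), ← mul_assoc, ih.1]
      · rw [← hs2 (P (m + k)), mul_assoc, ih.2]
  have hle' : ∀ m n, m ≤ n → (P m).1 * (P n).1 = (P n).1 ∧ (P n).1 * (P m).1 = (P n).1 := by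
    intro m n hmn
    obtain ⟨k, rfl⟩ := Nat.exists_eq_add_of_le hmn
    exact hle m k
  set g : ℕ → A := fun n => (P n).1 - (P (n + 1)).1 with hg
  have hg0 : ∀ n, g n ≠ 0 := by
    intro n h0
    rw [hg] at h0
    simp only [sub_eq_zero] at h0
    exact hs3 (P n) (Subtype.ext h0.symm)
  have hgg : ∀ n, g n * g n = g n := by
    intro n
    simp only [hg, mul_sub, sub_mul, (hle' n (n+1) (by omega)).1, (hle' n (n+1) (by omega)).2,
      (P n).2.1, (P (n+1)).2.1]
    abel
  have horth : ∀ m n, m ≠ n → g m * g n = 0 := by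
    intro m n hmn
    rcases lt_or_gt_of_ne hmn with h | h
    · simp only [hg, mul_sub, sub_mul, (hle' m n (by omega)).1, (hle' m (n+1) (by omega)).1,
        (hle' (m+1) n (by omega)).1, (hle' (m+1) (n+1) (by omega)).1]
      abel
    · simp only [hg, mul_sub, sub_mul, (hle' n m (by omega)).2, (hle' n (m+1) (by omega)).2,
        (hle' (n+1) m (by omega)).2, (hle' (n+1) (m+1) (by omega)).2]
      abel
  have hpg : ∀ n, p * g n = g n := by
    intro n
    have h1 := (hle' 0 n (by omega)).1
    have h2 := (hle' 0 (n+1) (by omega)).1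
    change p * _ = _ at h1
    change p * _ = _ at h2
    simp only [hg, mul_sub, h1, h2]
  set c : ℕ → ℝ := fun n => (1 / 2) ^ n * (‖g n‖ + 1)⁻¹ with hc
  have hc0 : ∀ n, 0 < c n := fun n => by positivity
  have hcle : ∀ n, c n ≤ (1 / 2) ^ n := by
    intro n
    apply mul_le_of_le_one_right (by positivity)
    apply inv_le_one_of_one_le₀
    linarith [norm_nonneg (g n)]
  have hz : Tendsto (fun n : ℕ => (1 / 2 : ℝ) ^ n) atTop (𝓝 0) :=
    tendsto_pow_atTop_nhds_zero_of_lt_one (by norm_num) (by norm_num)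
  have hct : Tendsto c atTop (𝓝 0) := squeeze_zero (fun n => (hc0 n).le) hcle hz
  have hsum : Summable (fun n => (c n : ℂ) • g n) := by
    refine Summable.of_norm_bounded (g := fun n : ℕ => (1 / 2 : ℝ) ^ n)
      (summable_geometric_of_lt_one (by norm_num) (by norm_num)) fun n => ?_
    rw [norm_smul, Complex.norm_real, Real.norm_of_nonneg (hc0 n).le, hc]
    simp only
    rw [mul_assoc]
    apply mul_le_of_le_one_right (by positivity)
    rw [inv_mul_le_iff₀ (by positivity)]
    linarith
  set w : A := ∑' n, (c n : ℂ) • g n with hw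
  have hwg : ∀ n, w * g n = (c n : ℂ) • g n := by
    intro n
    rw [hw, ← hsum.tsum_mul_right, tsum_eq_single n]
    · rw [smul_mul_assoc, hgg]
    · intro m hm
      rw [smul_mul_assoc, horth m n hm, smul_zero]
  have hpw : p * w = w := by
    rw [hw, ← hsum.tsum_mul_left]
    simp only [mul_smul_comm, hpg]
  have hmem : ∀ n, (1 + c n : ℂ) ∈ spectrum ℂ (d * (v * (p + w))) := by
    intro n
    rw [← mul_assoc, hv, mul_add, hpp, hpw, spectrum.mem_iff]
    intro hu
    apply hg0 n
    refine (hu.mul_right_eq_zero).1 ?_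
    rw [Algebra.algebraMap_eq_smul_one, sub_mul, add_mul, hwg, hpg, smul_mul_assoc, one_mul,
      add_smul, one_smul, sub_self]
  have hev := H (v * (p + w)) 1 one_ne_zero
  have htend : Tendsto (fun n => (1 + c n : ℂ)) atTop (𝓝[≠] 1) := by
    rw [tendsto_nhdsWithin_iff]
    constructor
    · have : Tendsto (fun n => (1 + (c n : ℂ))) atTop (𝓝 (1 + ((0 : ℝ) : ℂ))) :=
        tendsto_const_nhds.add ((Complex.continuous_ofReal.tendsto 0).comp hct)
      simpa using this
    · refine Eventually.of_forall fun n => ?_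
      simp [(hc0 n).ne']
  obtain ⟨n, hn⟩ := (htend.eventually hev).exists
  exact hn (hmem n)

theorem sp_dich {A : Type*} [AddCommGroup A] {B : Type*} [AddCommGroup B] (F G : A →+ B)
    (h : ∀ y, F y = 0 ∨ G y = 0) : (∀ y, F y = 0) ∨ (∀ y, G y = 0) := by
  by_contra hcon
  push Not at hcon
  obtain ⟨⟨y, hy⟩, ⟨z, hz⟩⟩ := hcon
  have h1 := (h y).resolve_left hy
  have h2 := (h z).resolve_right hz
  rcases h (y + z) with h3 | h3
  · rw [map_add, h2, add_zero] at h3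
    exact hy h3
  · rw [map_add, h1, zero_add] at h3
    exact hz h3

open Filter Topology in
theorem eq_iff_nzSpec_subset_of_socle_minimal
    {A : Type*} [NormedRing A] [NormOneClass A] [NormedAlgebra ℂ A] [CompleteSpace A]
    (hss : JacobsonSemisimple A) (hmin : SocleIsMinimalTwoSidedIdeal A)
    (a b : A) (ha : a ≠ 0) (hb : b ≠ 0)
    (hacc : ∀ x : A, ∀ z : ℂ, AccPt z (Filter.principal (spectrum ℂ (b * x))) → z = 0) :
    a = b ↔ ∀ x : A, nzSpec (a * x) ⊆ nzSpec (b * x) := by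
  constructor
  · rintro rfl x
    exact subset_rfl
  intro hsub
  have Hb : ∀ y, ∀ z : ℂ, z ≠ 0 → ∀ᶠ w in 𝓝[≠] z, w ∉ spectrum ℂ (b * y) := by
    intro y z hz
    have := mt (hacc y z) hz
    rwa [accPt_iff_frequently_nhdsNE, not_frequently] at this
  have Ha : ∀ y, ∀ z : ℂ, z ≠ 0 → ∀ᶠ w in 𝓝[≠] z, w ∉ spectrum ℂ (a * y) := by
    intro y z hz
    filter_upwards [Hb y z hz, nhdsWithin_le_nhds (isOpen_ne.mem_nhds hz)] with w hw hw0 hmem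
    exact hw (hsub y ⟨hmem, hw0⟩).1
  obtain ⟨I, hI, -, hImin⟩ := hmin
  have hImem : ∀ s, s ∈ I ↔ s ∈ socle A := by
    intro s
    rw [← hI]
    rfl
  obtain ⟨e, v, hev, he, he0, hcor⟩ := sp_exists hss b hb Hb
  have heI : e ∈ I := (hImem e).2 (sp_socle e he hcor)
  have hspan : TwoSidedIdeal.span {e} = I := by
    have hle : TwoSidedIdeal.span {e} ≤ I := by
      rw [TwoSidedIdeal.span_le]
      simpa using heI
    have hmem : e ∈ TwoSidedIdeal.span {e} := TwoSidedIdeal.subset_span rfl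
    rcases hImin _ hle with h | h
    · rw [h, TwoSidedIdeal.mem_bot] at hmem
      exact absurd hmem he0
    · exact h
  -- annihilating `A e` on the left means annihilating the socle
  have hann : ∀ c : A, (∀ u, c * u * e = 0) → ∀ s ∈ I, c * s = 0 := by
    intro c hc s hs
    let K : TwoSidedIdeal A := TwoSidedIdeal.mk' {s | ∀ u, c * u * s = 0}
      (by simp)
      (by intro x y hx hy u; rw [mul_add, hx u, hy u, add_zero])
      (by intro x hx u; rw [mul_neg, hx u, neg_zero])
      (by intro x y hy u; rw [← mul_assoc, mul_assoc c u x]; exact hy (u * x))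
      (by intro x y hx u; rw [← mul_assoc, hx u, zero_mul])
    have hK : TwoSidedIdeal.span {e} ≤ K := by
      rw [TwoSidedIdeal.span_le]
      intro t ht
      rw [Set.mem_singleton_iff] at ht
      subst ht
      simpa [K, TwoSidedIdeal.mem_mk'] using hc
    rw [hspan] at hK
    have := hK hs
    simp only [K, TwoSidedIdeal.mem_mk'] at this
    have this : ∀ u, c * u * s = 0 := this
    simpa using this 1
  have hkill : ∀ d : A, (∀ y, ∀ z : ℂ, z ≠ 0 → ∀ᶠ w in 𝓝[≠] z, w ∉ spectrum ℂ (d * y)) →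
      ∀ l : A, (∀ s ∈ I, l * s = 0) → d * l = 0 := by
    intro d Hd l hl
    by_contra hne
    obtain ⟨e', v', hev', he', he0', hcor'⟩ := sp_exists hss (d * l) hne
      (by intro y z hz; rw [mul_assoc]; exact Hd _ z hz)
    apply he0'
    have heI' : e' ∈ I := (hImem e').2 (sp_socle e' he' hcor')
    calc e' = d * l * v' * e' := by rw [hev', he']
      _ = d * (l * (v' * e')) := by simp only [mul_assoc]
      _ = 0 := by rw [hl _ (I.mul_mem_left _ _ heI'), mul_zero]
  have hkill2 : ∀ d : A, (∀ y, ∀ z : ℂ, z ≠ 0 → ∀ᶠ w in 𝓝[≠] z, w ∉ spectrum ℂ (d * y)) →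
      ∀ l : A, (∀ s ∈ I, l * s = 0) → ∀ y, d * y * l = 0 := by
    intro d Hd l hl y
    rw [mul_assoc]
    exact hkill d Hd _ (fun s hs => by rw [mul_assoc, hl s hs, mul_zero])
  -- pointwise dichotomy
  have hpt : ∀ u y, e * y * (a * u * e) = 0 ∨ e * y * ((a - b) * u * e) = 0 := by
    intro u y
    obtain ⟨s, hs⟩ := hcor (y * a * u)
    obtain ⟨t, ht⟩ := hcor (y * b * u)
    have hs' : e * y * (a * u * e) = s • e := by rw [← hs]; simp only [mul_assoc]
    have ht' : e * y * (b * u * e) = t • e := by rw [← ht]; simp only [mul_assoc]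
    rcases eq_or_ne s 0 with rfl | hs0
    · left; rw [hs', zero_smul]
    right
    have hcyc : ∀ c : A, nzSpec (c * (u * e * (e * y))) = nzSpec (e * y * (c * u * e)) := by
      intro c
      have : c * (u * e * (e * y)) = (c * u * e) * (e * y) := by simp only [mul_assoc]
      rw [this, nzSpec, spectrum.nonzero_mul_comm]
      rfl
    have h1 := hsub (u * e * (e * y))
    rw [hcyc, hcyc, hs', ht'] at h1
    have h2 := sp_smul_subset e he t (h1 (sp_smul_mem e he he0 s hs0))
    rw [Set.mem_singleton_iff] at h2
    rw [sub_mul, sub_mul, mul_sub, hs', ht', h2, sub_self]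
  have hz : ∀ z : A, z * e = z → (∀ y, e * y * z = 0) → z = 0 := by
    intro z hze h
    apply sp_ss2 hss
    intro y
    rw [← hze, mul_assoc z e y, mul_assoc z, ← mul_assoc (e * y), h, zero_mul, mul_zero]
  have hu : ∀ u, a * u * e = 0 ∨ (a - b) * u * e = 0 := by
    intro u
    have := sp_dich
      (AddMonoidHom.mk' (fun y => e * y * (a * u * e)) (by intro x y; simp only [mul_add, add_mul]))
      (AddMonoidHom.mk' (fun y => e * y * ((a - b) * u * e))
        (by intro x y; rw [mul_add e x y, add_mul]))
      (hpt u)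
    rcases this with h | h
    · left; exact hz _ (by rw [mul_assoc, he]) h
    · right; exact hz _ (by rw [mul_assoc, he]) h
  have hfin := sp_dich
      (AddMonoidHom.mk' (fun u => a * u * e) (by intro x y; simp only [mul_add, add_mul]))
      (AddMonoidHom.mk' (fun u => (a - b) * u * e)
        (by intro x y; rw [mul_add, add_mul]))
      hu
  rcases hfin with h | h
  · exact absurd (sp_ss2 hss a (hkill2 a Ha a (hann a h))) ha
  · have hl := hann (a - b) h
    have : a - b = 0 := by
      apply sp_ss2 hss
      intro y
      rw [sub_mul, sub_mul, hkill2 a Ha _ hl, hkill2 b Hb _ hl, sub_self]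
    exact sub_eq_zero.1 this
end
end
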